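/- arXiv:1902.07201 — 4 statements merged into one kernel-verified Lean document; each statement's English description precedes it below -/
import Mathlib

section
/- Let m ≥ 2 and let S_1, …, S_m be pairwise disjoint, non-empty, finite subsets of the affine space ℂ^n. If the affine span of the union S_1 ∪ … ∪ S_m has dimension at least 5, then there exists an (affine) line ℓ in ℂ^n such that ℓ intersects exactly two of the sets S_1, …, S_m (i.e., the set of indices i with ℓ ∩ S_i ≠ ∅ has exactly two elements). -/
/-!
Let `n` points carry a family of triples in which any two distinct points lie in triples of total
weight `1`, and let `A` be a matrix whose rows have exactly these triples as supports. Minimising a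
convex potential rescales the rows and columns of `A` so that every row has squared norm equal to
its weight and all columns have the same norm. The off-diagonal entries of the Gram matrix of the
columns are then small, and comparing its trace with its Frobenius norm bounds its rank below: `A`
has rank at least `n - 3`.

If every line through two points of a finite set of projective points contains a third one, the
linear relations between collinear triples form such a matrix, so the points span a subspace of
vector dimension at most `3` (Kelly's theorem).

If no line meets exactly two of the sets, choose `a` and `b` in two different sets and project away
from the direction of the line `ab`, with `a` as the origin. Any point off this line can be replaced
by one of another set with the same projective image, on its line to `a` or `b`. Hence the image of
the union is a configuration as above, and the union spans an affine space of dimension at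
most `3 + 1`.
-/

open Finset

section MatrixScaling

variable {ι T : Type*}

section BlockPotential

/-- For a block `s` of columns with positive weights `a`, the logarithm of
`∑ i ∈ s, a i * exp (x i)` minus the mean of `x` over `s`. Its gradient compares the normalised
weights of the scaled block with the uniform weights on `s`. -/
noncomputable def blockPotential (s : Finset ι) (a x : ι → ℝ) : ℝ :=
  Real.log (∑ i ∈ s, a i * Real.exp (x i)) - (∑ i ∈ s, x i) / #s

variable {s : Finset ι} {a : ι → ℝ}

lemma sum_mul_exp_pos (hs : s.Nonempty) (ha : ∀ i ∈ s, 0 < a i) (x : ι → ℝ) :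
    0 < ∑ i ∈ s, a i * Real.exp (x i) :=
  sum_pos (fun i hi => mul_pos (ha i hi) (Real.exp_pos _)) hs

lemma continuous_blockPotential (hs : s.Nonempty) (ha : ∀ i ∈ s, 0 < a i) :
    Continuous (blockPotential s a) :=
  .sub (.log (by fun_prop) fun x => (sum_mul_exp_pos hs ha x).ne') (by fun_prop)

lemma blockPotential_add_const (hs : s.Nonempty) (ha : ∀ i ∈ s, 0 < a i) (x : ι → ℝ) (c : ℝ) :
    blockPotential s a (fun i => x i + c) = blockPotential s a x := by
  have hcard : (#s : ℝ) ≠ 0 := by exact_mod_cast hs.card_pos.ne'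
  simp only [blockPotential, Real.exp_add, ← mul_assoc, ← sum_mul, sum_add_distrib, sum_const,
    nsmul_eq_mul]
  rw [Real.log_mul (sum_mul_exp_pos hs ha x).ne' (Real.exp_ne_zero c), Real.log_exp]
  field_simp
  ring

lemma exists_add_sub_div_le_blockPotential (hs : s.Nonempty) (ha : ∀ i ∈ s, 0 < a i) :
    ∃ m, ∀ x, ∀ i ∈ s, ∀ j ∈ s, m + (x j - x i) / #s ≤ blockPotential s a x := by
  obtain ⟨k, -, hmin⟩ := s.exists_min_image (fun i => Real.log (a i)) hs
  refine ⟨Real.log (a k), fun x i hi j hj => ?_⟩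
  set L := Real.log (∑ l ∈ s, a l * Real.exp (x l))
  have hcard : (0 : ℝ) < #s := by exact_mod_cast hs.card_pos
  have le_log : ∀ l ∈ s, Real.log (a k) + x l ≤ L := fun l hl => by
    have hterm : a l * Real.exp (x l) ≤ ∑ l ∈ s, a l * Real.exp (x l) :=
      single_le_sum (f := fun l => a l * Real.exp (x l))
        (fun l hl => (mul_pos (ha l hl) (Real.exp_pos _)).le) hl
    have hlog := Real.log_le_log (mul_pos (ha l hl) (Real.exp_pos _)) hterm
    rw [Real.log_mul (ha l hl).ne' (Real.exp_ne_zero _), Real.log_exp] at hlog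
    linarith [hmin l hl]
  have hsum : L - Real.log (a k) - x i ≤ ∑ l ∈ s, (L - Real.log (a k) - x l) :=
    single_le_sum (f := fun l => L - Real.log (a k) - x l)
      (fun l hl => by linarith [le_log l hl]) hi
  have hmean : Real.log (a k) + (L - Real.log (a k) - x i) / #s ≤ L - (∑ l ∈ s, x l) / #s := by
    rw [sum_sub_distrib, sum_const, nsmul_eq_mul] at hsum
    have hdiv := div_le_div_of_nonneg_right hsum hcard.le
    simp only [sub_div, mul_div_cancel_left₀ _ hcard.ne'] at hdiv ⊢
    linarith
  refine le_trans ?_ hmean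
  gcongr
  linarith [le_log j hj]

lemma hasFDerivAt_blockPotential [Finite ι] (hs : s.Nonempty) (ha : ∀ i ∈ s, 0 < a i)
    (x : ι → ℝ) :
    HasFDerivAt (blockPotential s a)
      (∑ i ∈ s, (a i * Real.exp (x i) / (∑ l ∈ s, a l * Real.exp (x l)) - 1 / #s) •
        (ContinuousLinearMap.proj i : (ι → ℝ) →L[ℝ] ℝ)) x := by
  have := Fintype.ofFinite ι
  have hcoord (i : ι) : HasFDerivAt (fun y : ι → ℝ => y i)
      (ContinuousLinearMap.proj i : (ι → ℝ) →L[ℝ] ℝ) x := hasFDerivAt_apply i x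
  have hlog := (HasFDerivAt.fun_sum fun i (_ : i ∈ s) =>
    (hcoord i).exp.const_mul (a i)).log (sum_mul_exp_pos hs ha x).ne'
  have hmean := (HasFDerivAt.fun_sum fun i (_ : i ∈ s) => hcoord i).mul_const ((#s : ℝ)⁻¹)
  refine (hlog.sub hmean).congr_fderiv ?_
  ext v
  simp only [_root_.sub_apply, _root_.smul_apply, _root_.sum_apply,
    ContinuousLinearMap.proj_apply, smul_eq_mul, mul_sum, ← sum_sub_distrib]
  exact sum_congr rfl fun i _ => by ring

end BlockPotential

lemma exists_forall_le_of_bddAbove_sub [Finite ι] {G : (ι → ℝ) → ℝ} (hcont : Continuous G)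
    (hinv : ∀ x c, G (fun i => x i + c) = G x)
    (hbdd : ∀ i j, BddAbove ((fun x => x j - x i) '' {x | G x ≤ G 0})) :
    ∃ x, ∀ y, G x ≤ G y := by
  rcases isEmpty_or_nonempty ι with _ | ⟨⟨k⟩⟩
  · exact ⟨0, fun y => by rw [Subsingleton.elim y 0]⟩
  choose C hC using hbdd
  obtain ⟨K, hK⟩ : ∃ K, ∀ i j, C i j ≤ K := by
    obtain ⟨K, hK⟩ := (Set.finite_range fun p : ι × ι => C p.1 p.2).bddAbove
    exact ⟨K, fun i j => hK ⟨(i, j), rfl⟩⟩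
  have hdiff : ∀ x, G x ≤ G 0 → ∀ i j, x j - x i ≤ K := fun x hx i j =>
    (hC i j ⟨x, hx, rfl⟩).trans (hK i j)
  have hK0 : 0 ≤ K := by simpa using hdiff 0 le_rfl k k
  have hzero : (0 : ι → ℝ) ∈ Set.Icc (fun _ => -K) (fun _ => K) :=
    ⟨fun _ => by simpa using hK0, fun _ => hK0⟩
  obtain ⟨x, -, hmin⟩ := isCompact_Icc.exists_isMinOn ⟨0, hzero⟩ hcont.continuousOn
  refine ⟨x, fun y => ?_⟩
  rcases le_total (G 0) (G y) with hy | hy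
  · exact (hmin hzero).trans hy
  · rw [← hinv y (-y k)]
    exact hmin ⟨fun i => by linarith [hdiff y hy i k], fun i => hdiff y hy k i⟩

theorem exists_exp_scaling [Finite ι] [Fintype T] [DecidableEq ι] {s : T → Finset ι}
    {a : T → ι → ℝ} {w : T → ℝ} (hs : ∀ t, (s t).Nonempty) (ha : ∀ t, ∀ i ∈ s t, 0 < a t i)
    (hw : ∀ t, 0 < w t)
    (hcover : ∀ i j, i ≠ j → ∃ t, i ∈ s t ∧ j ∈ s t) :
    ∃ x : ι → ℝ, ∀ i,
      ∑ t with i ∈ s t, w t * (a t i * Real.exp (x i) / ∑ l ∈ s t, a t l * Real.exp (x l)) =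
        ∑ t with i ∈ s t, w t / #(s t) := by
  have := Fintype.ofFinite ι
  let G : (ι → ℝ) → ℝ := fun x => ∑ t, w t * blockPotential (s t) (a t) x
  obtain ⟨x, hx⟩ : ∃ x, ∀ y, G x ≤ G y := by
    refine exists_forall_le_of_bddAbove_sub ?_ ?_ fun i j => ?_
    · exact continuous_finsetSum _ fun t _ =>
        (continuous_blockPotential (hs t) (ha t)).const_mul (w t)
    · exact fun x c => sum_congr rfl fun t _ => by rw [blockPotential_add_const (hs t) (ha t)]
    choose m hm using fun t => exists_add_sub_div_le_blockPotential (hs t) (ha t)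
    rcases eq_or_ne i j with rfl | hij
    · exact ⟨0, by rintro _ ⟨x, -, rfl⟩; simp⟩
    obtain ⟨t, hi, hj⟩ := hcover i j hij
    have hcard : (0 : ℝ) < #(s t) := by exact_mod_cast (hs t).card_pos
    have hmin : ∀ x u, m u ≤ blockPotential (s u) (a u) x := fun x u => by
      obtain ⟨l, hl⟩ := hs u
      simpa using hm u x l hl l hl
    refine ⟨(G 0 - ∑ u, w u * m u) / w t * #(s t), ?_⟩
    rintro _ ⟨x, hx, rfl⟩
    have hblock : w t * ((x j - x i) / #(s t)) ≤ G x - ∑ u, w u * m u := calc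
      _ ≤ w t * (blockPotential (s t) (a t) x - m t) :=
        mul_le_mul_of_nonneg_left (by linarith [hm t x i hi j hj]) (hw t).le
      _ ≤ ∑ u, w u * (blockPotential (s u) (a u) x - m u) :=
        single_le_sum (f := fun u => w u * (blockPotential (s u) (a u) x - m u))
          (fun u _ => mul_nonneg (hw u).le (sub_nonneg.mpr (hmin x u))) (mem_univ t)
      _ = _ := by simp only [G, mul_sub, sum_sub_distrib]
    rw [← div_le_iff₀ hcard, le_div_iff₀ (hw t), mul_comm]
    exact hblock.trans (sub_le_sub_right hx _)
  refine ⟨x, fun i => sub_eq_zero.mp ?_⟩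
  have hmin : IsLocalMin G x := Filter.Eventually.of_forall hx
  have hderiv := hmin.hasFDerivAt_eq_zero
    (HasFDerivAt.fun_sum fun t (_ : t ∈ univ) =>
      (hasFDerivAt_blockPotential (hs t) (ha t) x).const_mul (w t))
  -- The `i`-th partial derivative at `x` is the difference of the two sides of the claim.
  have hcoord := DFunLike.congr_fun hderiv (Pi.single i 1)
  simp only [Pi.single_apply, _root_.sum_apply, _root_.smul_apply,
    ContinuousLinearMap.proj_apply, smul_eq_mul, mul_ite, mul_one, mul_zero, sum_ite_eq',
    _root_.zero_apply] at hcoord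
  rw [← sum_sub_distrib, sum_filter]
  refine Eq.trans (sum_congr rfl fun t _ => ?_) hcoord
  split_ifs <;> ring

open Matrix

variable {𝕜 : Type*} [RCLike 𝕜]

theorem exists_scaled_matrix_sum_norm_sq_eq [Fintype ι] [Fintype T] [DecidableEq ι]
    {A : Matrix T ι 𝕜} {s : T → Finset ι} {w : T → ℝ} (hA : ∀ t i, A t i ≠ 0 ↔ i ∈ s t)
    (hs : ∀ t, (s t).Nonempty) (hw : ∀ t, 0 < w t)
    (hcover : ∀ i j, i ≠ j → ∃ t, i ∈ s t ∧ j ∈ s t) :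
    ∃ B : Matrix T ι 𝕜, B.rank ≤ A.rank ∧ (∀ t, ∀ i ∉ s t, B t i = 0) ∧
      (∀ t, ∑ i, ‖B t i‖ ^ 2 = w t) ∧ ∀ i, ∑ t, ‖B t i‖ ^ 2 = ∑ t with i ∈ s t, w t / #(s t) := by
  classical
  have ha : ∀ t, ∀ i ∈ s t, 0 < ‖A t i‖ ^ 2 := fun t i hi =>
    pow_pos (norm_pos_iff.mpr ((hA t i).mpr hi)) 2
  have hA0 : ∀ t, ∀ i ∉ s t, A t i = 0 := fun t i hi => not_not.mp (mt (hA t i).mp hi)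
  obtain ⟨x, hx⟩ := exists_exp_scaling hs ha hw hcover
  let Z : T → ℝ := fun t => ∑ i ∈ s t, ‖A t i‖ ^ 2 * Real.exp (x i)
  have hZ : ∀ t, 0 < Z t := fun t => sum_mul_exp_pos (hs t) (ha t) x
  let B : Matrix T ι 𝕜 := diagonal (fun t => ((√(w t / Z t) : ℝ) : 𝕜)) * A *
    diagonal (fun i => ((√(Real.exp (x i)) : ℝ) : 𝕜))
  have hB : ∀ t i, ‖B t i‖ ^ 2 = w t * (‖A t i‖ ^ 2 * Real.exp (x i) / Z t) := fun t i => by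
    simp only [B, mul_diagonal, diagonal_mul, norm_mul, mul_pow, RCLike.norm_ofReal, sq_abs,
      Real.sq_sqrt (div_pos (hw t) (hZ t)).le, Real.sq_sqrt (Real.exp_pos _).le]
    ring
  have hB0 : ∀ t, ∀ i ∉ s t, B t i = 0 := fun t i hi => by simp [B, hA0 t i hi]
  refine ⟨B, (rank_mul_le_left _ _).trans (rank_mul_le_right _ _), hB0, fun t => ?_, fun i => ?_⟩
  · calc ∑ i, ‖B t i‖ ^ 2 = ∑ i ∈ s t, ‖B t i‖ ^ 2 :=
          (sum_subset (subset_univ _) fun i _ hi => by simp [hB0 t i hi]).symm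
      _ = w t := by
          simp only [hB, ← mul_sum, ← sum_div]
          rw [div_self (hZ t).ne', mul_one]
  · rw [← hx i, sum_filter]
    refine sum_congr rfl fun t _ => ?_
    split_ifs with hi
    · exact hB t i
    · simp [hB0 t i hi]

end MatrixScaling

section RankBound

open Matrix
open scoped ComplexOrder

variable {ι T 𝕜 : Type*} [RCLike 𝕜]

section Trace

variable [Fintype ι]

lemma trace_mul_self_eq_sum_eigenvalues_sq [DecidableEq ι] {M : Matrix ι ι 𝕜} (hM : M.IsHermitian) :
    (M * M).trace = ∑ i, (hM.eigenvalues i : 𝕜) ^ 2 := by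
  conv_lhs => rw [hM.spectral_theorem]
  rw [← map_mul, diagonal_mul_diagonal, Unitary.conjStarAlgAut_apply, trace_mul_cycle]
  simp [Matrix.trace, sq]

lemma sum_norm_sq_eq_sum_eigenvalues_sq [DecidableEq ι] {M : Matrix ι ι 𝕜} (hM : M.IsHermitian) :
    ∑ i, ∑ j, ‖M i j‖ ^ 2 = ∑ i, hM.eigenvalues i ^ 2 := by
  have htrace : (M * M).trace = ∑ i, ∑ j, (‖M i j‖ : 𝕜) ^ 2 := by
    simp only [Matrix.trace, Matrix.diag, mul_apply, ← RCLike.mul_conj]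
    exact sum_congr rfl fun i _ => sum_congr rfl fun j _ => by rw [← hM.apply j i]; rfl
  rw [trace_mul_self_eq_sum_eigenvalues_sq hM] at htrace
  exact_mod_cast htrace.symm

theorem sq_re_trace_le_rank_mul_sum_norm_sq {M : Matrix ι ι 𝕜} (hM : M.IsHermitian) :
    RCLike.re M.trace ^ 2 ≤ M.rank * ∑ i, ∑ j, ‖M i j‖ ^ 2 := by
  classical
  have htrace : RCLike.re M.trace = ∑ i with hM.eigenvalues i ≠ 0, hM.eigenvalues i := by
    rw [sum_filter_ne_zero, hM.trace_eq_sum_eigenvalues]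
    simp
  rw [htrace, sum_norm_sq_eq_sum_eigenvalues_sq hM, hM.rank_eq_card_non_zero_eigs,
    Fintype.card_subtype]
  refine sq_sum_le_card_mul_sum_sq.trans ?_
  gcongr
  exact filter_subset _ univ

lemma sum_sum_erase_mul_le [DecidableEq ι] {s : Finset ι} {f : ι → ℝ} (hf : ∀ i ∉ s, f i = 0) :
    ∑ i, ∑ j ∈ univ.erase i, f i * f j ≤ (1 - 1 / #s) * (∑ i, f i) ^ 2 := by
  have hsum : ∑ i ∈ s, f i = ∑ i, f i := sum_subset (subset_univ s) fun i _ hi => hf i hi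
  have hsq : ∑ i ∈ s, f i ^ 2 ≤ ∑ i, f i ^ 2 :=
    sum_le_sum_of_subset_of_nonneg (subset_univ s) fun i _ _ => sq_nonneg _
  have hoff : ∑ i, ∑ j ∈ univ.erase i, f i * f j = (∑ i, f i) ^ 2 - ∑ i, f i ^ 2 := by
    simp only [← mul_sum, sum_erase_eq_sub (mem_univ _), sum_sub_distrib, ← sum_mul, sq]
  have hcs : (∑ i, f i) ^ 2 / #s ≤ ∑ i, f i ^ 2 := by
    rw [← hsum]
    exact (div_le_of_le_mul₀ (by positivity) (by positivity)
      (sq_sum_le_card_mul_sum_sq.trans_eq (mul_comm _ _))).trans hsq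
  rw [hoff, sub_mul, one_mul, one_div_mul_eq_div]
  linarith

end Trace

variable [Fintype T]

lemma gram_apply_self (B : Matrix T ι 𝕜) (i : ι) :
    (Bᴴ * B) i i = ((∑ t, ‖B t i‖ ^ 2 : ℝ) : 𝕜) := by
  simp [mul_apply, RCLike.conj_mul]

variable [DecidableEq ι]

/-- A weighted pairwise balanced design: a family of blocks `s t` of `q` points each, with positive
weights `w t`, such that the blocks through any two distinct points have total weight `1`. -/
structure IsWeightedDesign (s : T → Finset ι) (w : T → ℝ) (q : ℕ) : Prop where
  weight_pos : ∀ t, 0 < w t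
  card_block : ∀ t, #(s t) = q
  sum_weight_pair : ∀ i j, i ≠ j → ∑ t with i ∈ s t ∧ j ∈ s t, w t = 1

namespace IsWeightedDesign

variable {s : T → Finset ι} {w : T → ℝ} {q : ℕ}

lemma exists_mem_block (h : IsWeightedDesign s w q) {i j : ι} (hij : i ≠ j) :
    ∃ t, i ∈ s t ∧ j ∈ s t := by
  have hsum : ∑ t with i ∈ s t ∧ j ∈ s t, w t ≠ 0 := by simp [h.sum_weight_pair i j hij]
  obtain ⟨t, ht, -⟩ := exists_ne_zero_of_sum_ne_zero hsum
  exact ⟨t, by simpa using ht⟩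

lemma norm_sq_gram_apply_le (h : IsWeightedDesign s w q) {B : Matrix T ι 𝕜}
    (hB : ∀ t, ∀ i ∉ s t, B t i = 0) {i j : ι} (hij : i ≠ j) :
    ‖(Bᴴ * B) i j‖ ^ 2 ≤ ∑ t, ‖B t i‖ ^ 2 * ‖B t j‖ ^ 2 / w t := by
  have hnorm : ‖(Bᴴ * B) i j‖ ≤ ∑ t with i ∈ s t ∧ j ∈ s t, ‖B t i‖ * ‖B t j‖ := calc
    _ ≤ ∑ t, ‖star (B t i) * B t j‖ := norm_sum_le _ _
    _ = ∑ t, ‖B t i‖ * ‖B t j‖ := by simp only [norm_mul, norm_star]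
    _ = ∑ t with i ∈ s t ∧ j ∈ s t, ‖B t i‖ * ‖B t j‖ := by
      refine (sum_filter_of_ne fun t _ hne => ?_).symm
      contrapose! hne
      by_cases hi : i ∈ s t
      · simp [hB t j (hne hi)]
      · simp [hB t i hi]
  calc ‖(Bᴴ * B) i j‖ ^ 2 ≤ (∑ t with i ∈ s t ∧ j ∈ s t, ‖B t i‖ * ‖B t j‖) ^ 2 := by gcongr
    _ ≤ (∑ t with i ∈ s t ∧ j ∈ s t, w t) *
          ∑ t with i ∈ s t ∧ j ∈ s t, ‖B t i‖ ^ 2 * ‖B t j‖ ^ 2 / w t := by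
        refine sum_sq_le_sum_mul_sum_of_sq_le_mul _ (fun t _ => (h.weight_pos t).le)
          (fun t _ => div_nonneg (by positivity) (h.weight_pos t).le) fun t _ => ?_
        rw [mul_div_cancel₀ _ (h.weight_pos t).ne', mul_pow]
    _ ≤ ∑ t, ‖B t i‖ ^ 2 * ‖B t j‖ ^ 2 / w t := by
        rw [h.sum_weight_pair i j hij, one_mul]
        exact sum_le_sum_of_subset_of_nonneg (filter_subset _ _) fun t _ _ =>
          div_nonneg (by positivity) (h.weight_pos t).le

variable [Fintype ι]

lemma sum_weight_point (h : IsWeightedDesign s w q) (i : ι) :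
    (q - 1) * ∑ t with i ∈ s t, w t = Fintype.card ι - 1 := by
  have hblock : ∀ t, i ∈ s t →
      ∑ j ∈ univ.erase i, (if j ∈ s t then w t else 0) = (q - 1) * w t := fun t hi => by
    have hinter : univ.erase i ∩ s t = (s t).erase i := by ext; simp
    have hq : 1 ≤ q := h.card_block t ▸ card_pos.mpr ⟨i, hi⟩
    rw [sum_ite_mem, hinter, sum_const, card_erase_of_mem hi, h.card_block, nsmul_eq_mul,
      Nat.cast_sub hq, Nat.cast_one]
  calc (q - 1) * ∑ t with i ∈ s t, w t
      = ∑ t with i ∈ s t, ∑ j ∈ univ.erase i, if j ∈ s t then w t else 0 := by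
        rw [mul_sum]
        exact sum_congr rfl fun t ht => (hblock t (by simpa using ht)).symm
    _ = ∑ j ∈ univ.erase i, ∑ t with i ∈ s t ∧ j ∈ s t, w t := by
        rw [sum_comm]
        simp only [← filter_filter, sum_filter]
    _ = ∑ j ∈ univ.erase i, 1 :=
        sum_congr rfl fun j hj => h.sum_weight_pair i j (ne_of_mem_erase hj).symm
    _ = Fintype.card ι - 1 := by
        simp [card_erase_of_mem, Nat.cast_sub (Fintype.card_pos_iff.mpr ⟨i⟩)]

lemma sum_norm_sq_gram_offDiag_le (h : IsWeightedDesign s w q) {B : Matrix T ι 𝕜}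
    (hB : ∀ t, ∀ i ∉ s t, B t i = 0) (hrow : ∀ t, ∑ i, ‖B t i‖ ^ 2 = w t) :
    ∑ i, ∑ j ∈ univ.erase i, ‖(Bᴴ * B) i j‖ ^ 2 ≤ (1 - 1 / q) * ∑ t, w t := by
  have hblock : ∀ t, ∑ i, ∑ j ∈ univ.erase i, ‖B t i‖ ^ 2 * ‖B t j‖ ^ 2 / w t ≤
      (1 - 1 / q) * w t := fun t => by
    have hle := sum_sum_erase_mul_le (f := fun i => ‖B t i‖ ^ 2) (s := s t)
      fun i hi => by simp [hB t i hi]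
    simp only [← sum_div]
    rwa [div_le_iff₀ (h.weight_pos t), mul_assoc, ← sq, ← h.card_block t, ← hrow t]
  calc ∑ i, ∑ j ∈ univ.erase i, ‖(Bᴴ * B) i j‖ ^ 2
      ≤ ∑ i, ∑ j ∈ univ.erase i, ∑ t, ‖B t i‖ ^ 2 * ‖B t j‖ ^ 2 / w t :=
        sum_le_sum fun i _ => sum_le_sum fun j hj =>
          h.norm_sq_gram_apply_le hB (ne_of_mem_erase hj).symm
    _ = ∑ t, ∑ i, ∑ j ∈ univ.erase i, ‖B t i‖ ^ 2 * ‖B t j‖ ^ 2 / w t := by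
        rw [sum_comm]
        exact sum_congr rfl fun i _ => sum_comm
    _ ≤ (1 - 1 / q) * ∑ t, w t := by
        rw [mul_sum]
        exact sum_le_sum fun t _ => hblock t

lemma sum_norm_sq_gram_le (h : IsWeightedDesign s w q) {B : Matrix T ι 𝕜}
    (hB : ∀ t, ∀ i ∉ s t, B t i = 0) (hrow : ∀ t, ∑ i, ‖B t i‖ ^ 2 = w t) {c : ℝ}
    (hcol : ∀ i, ∑ t, ‖B t i‖ ^ 2 = c) :
    ∑ i, ∑ j, ‖(Bᴴ * B) i j‖ ^ 2 ≤ Fintype.card ι * c * (c + 1 - 1 / q) := by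
  have htotal : ∑ t, w t = Fintype.card ι * c := by
    simp only [← hrow]
    rw [sum_comm]
    simp [hcol]
  have hdiag : ∀ i, ‖(Bᴴ * B) i i‖ ^ 2 = c ^ 2 := fun i => by
    rw [gram_apply_self, hcol, RCLike.norm_ofReal, sq_abs]
  calc ∑ i, ∑ j, ‖(Bᴴ * B) i j‖ ^ 2
      = ∑ i, ‖(Bᴴ * B) i i‖ ^ 2 + ∑ i, ∑ j ∈ univ.erase i, ‖(Bᴴ * B) i j‖ ^ 2 := by
        rw [← sum_add_distrib]
        exact sum_congr rfl fun i _ => (add_sum_erase _ _ (mem_univ i)).symm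
    _ ≤ Fintype.card ι * c ^ 2 + (1 - 1 / q) * (Fintype.card ι * c) := by
        rw [← htotal]
        refine add_le_add (by simp [hdiag]) (h.sum_norm_sq_gram_offDiag_le hB hrow)
    _ = Fintype.card ι * c * (c + 1 - 1 / q) := by ring

lemma card_mul_le_rank_mul [Nonempty ι] (h : IsWeightedDesign s w q) {B : Matrix T ι 𝕜}
    (hB : ∀ t, ∀ i ∉ s t, B t i = 0) (hrow : ∀ t, ∑ i, ‖B t i‖ ^ 2 = w t) {c : ℝ} (hc : 0 < c)
    (hcol : ∀ i, ∑ t, ‖B t i‖ ^ 2 = c) :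
    Fintype.card ι * c ≤ B.rank * (c + 1 - 1 / q) := by
  have htrace : RCLike.re (Bᴴ * B).trace = Fintype.card ι * c := by
    simp [Matrix.trace, gram_apply_self, hcol]
  have hrank := sq_re_trace_le_rank_mul_sum_norm_sq (isHermitian_conjTranspose_mul_self B)
  rw [htrace, rank_conjTranspose_mul_self] at hrank
  have hn : 0 < Fintype.card ι * c := mul_pos (by exact_mod_cast Fintype.card_pos) hc
  refine le_of_mul_le_mul_left ?_ hn
  calc Fintype.card ι * c * (Fintype.card ι * c)
      = (Fintype.card ι * c) ^ 2 := (sq _).symm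
    _ ≤ B.rank * ∑ i, ∑ j, ‖(Bᴴ * B) i j‖ ^ 2 := hrank
    _ ≤ B.rank * (Fintype.card ι * c * (c + 1 - 1 / q)) := by
        gcongr
        exact h.sum_norm_sq_gram_le hB hrow hcol
    _ = _ := by ring

theorem card_mul_card_sub_one_le (h : IsWeightedDesign s w q) (hq : 1 < q) {A : Matrix T ι 𝕜}
    (hA : ∀ t i, A t i ≠ 0 ↔ i ∈ s t) :
    (Fintype.card ι : ℝ) * (Fintype.card ι - 1) ≤
      A.rank * (Fintype.card ι - 1 + (q - 1) ^ 2) := by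
  have hq' : (0 : ℝ) < q - 1 := sub_pos.mpr (by exact_mod_cast hq)
  rcases lt_trichotomy (Fintype.card ι) 1 with hlt | heq | hgt
  · have hcard : Fintype.card ι = 0 := Nat.lt_one_iff.mp hlt
    have hrank : A.rank = 0 := Nat.le_zero.mp (A.rank_le_card_width.trans_eq hcard)
    simp [hcard, hrank]
  · rw [heq]
    simpa using by positivity
  have : Nonempty ι := Fintype.card_pos_iff.mp (by omega)
  have hcard : (0 : ℝ) < Fintype.card ι - 1 := sub_pos.mpr (by exact_mod_cast hgt)
  have hs : ∀ t, (s t).Nonempty := fun t => card_pos.mp (by rw [h.card_block]; omega)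
  obtain ⟨B, hrank, hB, hrow, hcol⟩ := exists_scaled_matrix_sum_norm_sq_eq hA hs h.weight_pos
    fun i j => h.exists_mem_block
  have hscale : (0 : ℝ) < (q - 1) * q := mul_pos hq' (by linarith)
  set c : ℝ := (Fintype.card ι - 1) / ((q - 1) * q) with hc
  have hB_rank : Fintype.card ι * c ≤ B.rank * (c + 1 - 1 / q) :=
    h.card_mul_le_rank_mul hB hrow (div_pos hcard hscale) fun i => by
      simp only [hcol, h.card_block, ← sum_div]
      rw [hc, ← h.sum_weight_point i, mul_div_mul_left _ _ hq'.ne']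
  have hmul : c * ((q - 1) * q) = Fintype.card ι - 1 := div_mul_cancel₀ _ hscale.ne'
  have hq0 : (q : ℝ) ≠ 0 := by linarith
  calc (Fintype.card ι : ℝ) * (Fintype.card ι - 1)
      = Fintype.card ι * c * ((q - 1) * q) := by rw [← hmul, mul_assoc]
    _ ≤ B.rank * (c + 1 - 1 / q) * ((q - 1) * q) := by gcongr
    _ = B.rank * (c * ((q - 1) * q) + (q - 1) ^ 2) := by field_simp; ring
    _ ≤ A.rank * (Fintype.card ι - 1 + (q - 1) ^ 2) := by
        rw [hmul]
        gcongr

theorem card_le_rank_add_three (h : IsWeightedDesign s w 3) {A : Matrix T ι 𝕜}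
    (hA : ∀ t i, A t i ≠ 0 ↔ i ∈ s t) : Fintype.card ι ≤ A.rank + 3 := by
  have hcard := h.card_mul_card_sub_one_le (by norm_num) hA
  by_contra! hlt
  have hlt' : (A.rank : ℝ) + 4 ≤ Fintype.card ι := by exact_mod_cast hlt
  push_cast at hcard
  nlinarith

end IsWeightedDesign

end RankBound

section CollinearTriples

variable {ι : Type*} [DecidableEq ι]

theorem isWeightedDesign_triples {𝓛 : Finset (Finset ι)}
    (hline : ∀ i j, i ≠ j → ∃! L, L ∈ 𝓛 ∧ i ∈ L ∧ j ∈ L) (hcard : ∀ L ∈ 𝓛, 3 ≤ #L) :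
    IsWeightedDesign (fun t : Σ L : 𝓛, (L : Finset ι).powersetCard 3 => (t.2 : Finset ι))
      (fun t => 1 / ((#(t.1 : Finset ι) - 2 : ℕ) : ℝ)) 3 where
  weight_pos t := one_div_pos.mpr (by exact_mod_cast by have := hcard t.1 t.1.2; omega)
  card_block t := (mem_powersetCard.mp t.2.2).2
  sum_weight_pair i j hij := by
    obtain ⟨L, ⟨hL, hi, hj⟩, huniq⟩ := hline i j hij
    have hzero : ∀ M : 𝓛, M ≠ ⟨L, hL⟩ → ∀ t : (M : Finset ι).powersetCard 3,
        ¬ (i ∈ (t : Finset ι) ∧ j ∈ (t : Finset ι)) := fun M hM t ht =>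
      have hsub := (mem_powersetCard.mp t.2).1
      hM (Subtype.ext (huniq M ⟨M.2, hsub ht.1, hsub ht.2⟩))
    have hcount : #{t ∈ L.powersetCard 3 | i ∈ t ∧ j ∈ t} = #L - 2 := by
      have hpair : #{i, j} = 2 := card_pair hij
      have hsub : ({i, j} : Finset ι) ⊆ L := by simp [insert_subset_iff, hi, hj]
      simpa [hpair, insert_subset_iff] using
        card_filter_powersetCard_subset {i, j} L 3 hsub (by omega)
    have hpos : ((#L - 2 : ℕ) : ℝ) ≠ 0 := by
      exact_mod_cast by have := hcard L hL; omega
    rw [sum_filter, Fintype.sum_sigma, Fintype.sum_eq_single ⟨L, hL⟩ fun M hM =>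
      sum_eq_zero fun t _ => if_neg (hzero M hM t)]
    rw [sum_coe_sort (L.powersetCard 3)
      fun t => if i ∈ t ∧ j ∈ t then 1 / ((#L - 2 : ℕ) : ℝ) else 0, ← sum_filter, sum_const,
      hcount, nsmul_eq_mul, mul_one_div_cancel hpos]

end CollinearTriples

section Relations

variable {ι T K V : Type*} [Field K] [AddCommGroup V] [Module K V] [Fintype ι]

lemma exists_smul_sum_eq_zero_support_eq [DecidableEq ι] {v : ι → V} {t : Finset ι}
    (hdep : ¬ LinearIndepOn K v t) (hindep : ∀ i ∈ t, LinearIndepOn K v (t.erase i : Finset ι)) :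
    ∃ a : ι → K, (∀ i, a i ≠ 0 ↔ i ∈ t) ∧ ∑ i, a i • v i = 0 := by
  obtain ⟨a, hsum, j, hj, haj⟩ := not_linearIndepOn_finset_iff.mp hdep
  refine ⟨fun i => if i ∈ t then a i else 0, fun i => ?_, by simpa [ite_smul] using hsum⟩
  refine ⟨fun hne => by_contra fun hi => hne (if_neg hi), fun hi => ?_⟩
  refine (if_pos hi).trans_ne fun hai => ?_
  have hji : j ≠ i := by rintro rfl; exact haj hai
  refine haj (linearIndepOn_finset_iff.mp (hindep i hi) a ?_ j (mem_erase.mpr ⟨hji, hj⟩))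
  rwa [sum_erase _ (by rw [hai, zero_smul])]

lemma rank_add_finrank_span_le [Finite T] {A : Matrix T ι K} {v : ι → V}
    (hA : ∀ t, ∑ i, A t i • v i = 0) :
    A.rank + Module.finrank K (Submodule.span K (Set.range v)) ≤ Fintype.card ι := by
  have := Fintype.ofFinite T
  have hker : A.rank ≤ Module.finrank K (LinearMap.ker (Fintype.linearCombination K v)) := by
    rw [Matrix.rank_eq_finrank_span_row]
    refine Submodule.finrank_mono (Submodule.span_le.mpr ?_)
    rintro _ ⟨t, rfl⟩
    simpa [Fintype.linearCombination_apply] using hA t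
  have hnullity := LinearMap.finrank_range_add_finrank_ker (Fintype.linearCombination K v)
  rw [Fintype.range_linearCombination, Module.finrank_fintype_fun_eq_card] at hnullity
  omega

end Relations

section Kelly

open scoped LinearAlgebra.Projectivization

section CollinearPoints

variable {K V : Type*} [Field K] [AddCommGroup V] [Module K V] {x y u v : ℙ K V}

lemma finrank_sup_submodule_of_ne (h : x ≠ y) :
    Module.finrank K (x.submodule ⊔ y.submodule : Submodule K V) = 2 := by
  have hspan := finrank_span_eq_card (Projectivization.linearIndependent_pair_iff_ne.mpr h)
  rwa [Matrix.range_cons_cons_empty, Submodule.span_insert, ← Projectivization.submodule_eq,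
    ← Projectivization.submodule_eq, Fintype.card_fin] at hspan

lemma sup_submodule_eq_of_le (hxy : x ≠ y) (huv : u ≠ v)
    (hx : x.submodule ≤ u.submodule ⊔ v.submodule)
    (hy : y.submodule ≤ u.submodule ⊔ v.submodule) :
    x.submodule ⊔ y.submodule = u.submodule ⊔ v.submodule :=
  Submodule.eq_of_le_of_finrank_eq (sup_le hx hy)
    ((finrank_sup_submodule_of_ne hxy).trans (finrank_sup_submodule_of_ne huv).symm)

lemma linearIndepOn_rep_pair {ι : Type*} {p : ι → ℙ K V} (hp : p.Injective) (i j : ι) :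
    LinearIndepOn K (fun i => (p i).rep) {i, j} := by
  rcases eq_or_ne i j with rfl | hij
  · simpa using (p i).rep_nonzero
  · rw [LinearIndepOn.pair_iff _ hij]
    exact LinearIndependent.pair_iff.mp
      (Projectivization.linearIndependent_pair_iff_ne.mpr (hp.ne hij))

lemma exists_smul_rep_sum_eq_zero_of_card_eq_three {ι : Type*} [Fintype ι]
    {p : ι → ℙ K V} (hp : p.Injective) (huv : u ≠ v) {t : Finset ι} (ht : #t = 3)
    (htU : ∀ i ∈ t, (p i).submodule ≤ u.submodule ⊔ v.submodule) :
    ∃ a : ι → K, (∀ i, a i ≠ 0 ↔ i ∈ t) ∧ ∑ i, a i • (p i).rep = 0 := by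
  classical
  refine exists_smul_sum_eq_zero_support_eq (fun hindep => ?_) fun i hi => ?_
  · have hspan : Submodule.span K (Set.range fun i : t => (p i).rep) ≤
        u.submodule ⊔ v.submodule := by
      refine Submodule.span_le.mpr ?_
      rintro _ ⟨i, rfl⟩
      refine htU i i.2 ?_
      rw [Projectivization.submodule_eq]
      exact Submodule.mem_span_singleton_self _
    have hcard : Fintype.card t ≤ 2 :=
      (finrank_span_eq_card hindep).ge.trans
        ((Submodule.finrank_mono hspan).trans_eq (finrank_sup_submodule_of_ne huv))
    rw [Fintype.card_coe, ht] at hcard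
    omega
  · obtain ⟨j, k, -, hjk⟩ := card_eq_two.mp ((card_erase_of_mem hi).trans (by rw [ht]))
    simpa [hjk] using linearIndepOn_rep_pair hp j k

end CollinearPoints

section LinearSpace

variable {K V : Type*} [Field K] [AddCommGroup V] [Module K V]

/-- A set of projective points is a Sylvester–Gallai configuration if the line joining any two of
its points contains a third one. The line through `x` and `y` is encoded as the subspace
`x.submodule ⊔ y.submodule`. -/
def IsSylvesterGallai (E : Set (ℙ K V)) : Prop :=
  ∀ x ∈ E, ∀ y ∈ E, x ≠ y →
    ∃ z ∈ E, z ≠ x ∧ z ≠ y ∧ z.submodule ≤ x.submodule ⊔ y.submodule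

variable {E : Set (ℙ K V)} [Fintype E]

open scoped Classical in
/-- The lines joining two points of a finite set `E` of projective points, each encoded as the set
of points of `E` on it. -/
noncomputable def connectingLines (E : Set (ℙ K V)) [Fintype E] : Finset (Finset E) :=
  univ.offDiag.image fun p : E × E =>
    univ.filter fun z : E => z.1.submodule ≤ p.1.1.submodule ⊔ p.2.1.submodule

lemma mem_connectingLines {L : Finset E} :
    L ∈ connectingLines E ↔ ∃ x y : E, x ≠ y ∧
      ∀ z : E, z ∈ L ↔ z.1.submodule ≤ x.1.submodule ⊔ y.1.submodule := by
  simp [connectingLines, Finset.ext_iff, eq_comm]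

lemma existsUnique_connectingLines (i j : E) (hij : i ≠ j) :
    ∃! L, L ∈ connectingLines E ∧ i ∈ L ∧ j ∈ L := by
  classical
  refine ⟨univ.filter fun z : E => z.1.submodule ≤ i.1.submodule ⊔ j.1.submodule,
    ⟨mem_connectingLines.mpr ⟨i, j, hij, by simp⟩, by simp, by simp⟩, ?_⟩
  rintro L ⟨hL, hi, hj⟩
  obtain ⟨x, y, hxy, hmem⟩ := mem_connectingLines.mp hL
  have hsup := sup_submodule_eq_of_le (Subtype.val_injective.ne hij)
    (Subtype.val_injective.ne hxy) ((hmem i).mp hi) ((hmem j).mp hj)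
  ext z
  simp [hmem, hsup]

lemma IsSylvesterGallai.three_le_card (hE : IsSylvesterGallai E) {L : Finset E}
    (hL : L ∈ connectingLines E) : 3 ≤ #L := by
  obtain ⟨x, y, hxy, hmem⟩ := mem_connectingLines.mp hL
  obtain ⟨z, hz, hzx, hzy, hle⟩ := hE x x.2 y y.2 (Subtype.val_injective.ne hxy)
  refine two_lt_card.mpr ⟨x, (hmem x).mpr le_sup_left, y, (hmem y).mpr le_sup_right, ⟨z, hz⟩,
    (hmem _).mpr hle, hxy, ?_, ?_⟩
  · rintro rfl
    exact hzx rfl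
  · rintro rfl
    exact hzy rfl

end LinearSpace

theorem IsSylvesterGallai.finrank_iSup_submodule_le_three {𝕜 V : Type*} [RCLike 𝕜]
    [AddCommGroup V] [Module 𝕜 V] {E : Set (ℙ 𝕜 V)} (hE : IsSylvesterGallai E)
    (hfin : E.Finite) : Module.finrank 𝕜 (⨆ x ∈ E, x.submodule : Submodule 𝕜 V) ≤ 3 := by
  classical
  have := hfin.fintype
  have hrel : ∀ t : Σ L : connectingLines E, (L : Finset E).powersetCard 3, ∃ a : E → 𝕜,
      (∀ i, a i ≠ 0 ↔ i ∈ (t.2 : Finset E)) ∧ ∑ i, a i • i.1.rep = 0 := by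
    rintro ⟨⟨L, hL⟩, t, ht⟩
    obtain ⟨x, y, hxy, hmem⟩ := mem_connectingLines.mp hL
    obtain ⟨hsub, hcard⟩ := mem_powersetCard.mp ht
    exact exists_smul_rep_sum_eq_zero_of_card_eq_three Subtype.val_injective
      (Subtype.val_injective.ne hxy) hcard fun i hi => (hmem i).mp (hsub hi)
  choose A hA_support hA_ker using hrel
  have hdesign := isWeightedDesign_triples existsUnique_connectingLines fun L => hE.three_le_card
  have hcard := hdesign.card_le_rank_add_three (A := Matrix.of A) hA_support
  have hrank := rank_add_finrank_span_le (A := Matrix.of A) hA_ker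
  have hspan : (⨆ x ∈ E, x.submodule : Submodule 𝕜 V) =
      Submodule.span 𝕜 (Set.range fun x : E => x.1.rep) := by
    rw [iSup_subtype', Submodule.span_range_eq_iSup]
    simp only [Projectivization.submodule_eq]
  rw [hspan]
  omega

end Kelly

section Projection

open scoped LinearAlgebra.Projectivization
open Submodule (span span_le span_mono subset_span mem_span_singleton_self)

variable {K V P W ι : Type*} [Field K] [AddCommGroup V] [Module K V] [AddTorsor V P]
  [AddCommGroup W] [Module K W]

lemma eq_of_submodule_le {x y : ℙ K W} (h : x.submodule ≤ y.submodule) : x = y :=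
  Projectivization.submodule_injective
    (Submodule.eq_of_le_of_finrank_eq h (by simp only [Projectivization.finrank_submodule]))

lemma smul_add_smul_notMem {x y : ℙ K W} (hxy : x ≠ y) {u v : W} (hu : u ∈ x.submodule)
    (hv : span K {v} = y.submodule) (a : K) {b : K} (hb : b ≠ 0) :
    a • u + b • v ∉ x.submodule := fun hmem => by
  rw [Submodule.add_mem_iff_right _ (Submodule.smul_mem _ a hu),
    Submodule.smul_mem_iff _ hb] at hmem
  refine hxy (eq_of_submodule_le ?_).symm
  rwa [← hv, Submodule.span_singleton_le_iff_mem]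

lemma finrank_le_finrank_map_mkQ_add_finrank (D N : Submodule K V) [FiniteDimensional K D]
    [FiniteDimensional K N] :
    Module.finrank K D ≤ Module.finrank K (D.map N.mkQ) + Module.finrank K N := by
  rw [← LinearMap.finrank_range_add_finrank_ker (N.mkQ.domRestrict D), LinearMap.range_domRestrict,
    LinearMap.ker_domRestrict, Submodule.ker_mkQ, ← Submodule.finrank_map_subtype_eq,
    Submodule.map_comap_subtype]
  gcongr
  exact Submodule.finrank_mono inf_le_right

lemma exists_affineMap_eq_zero_linear_eq_mkQ (a b : P) :
    ∃ φ : P →ᵃ[K] V ⧸ span K {b -ᵥ a}, φ a = 0 ∧ φ b = 0 ∧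
      φ.linear = (span K {b -ᵥ a}).mkQ := by
  refine ⟨(span K {b -ᵥ a}).mkQ.toAffineMap.comp (AffineEquiv.vaddConst K a).symm, ?_, ?_, ?_⟩
  · simp
  · simp [mem_span_singleton_self]
  · ext; simp

lemma span_image_eq_map_vectorSpan (φ : P →ᵃ[K] W) {A : Set P} {a : P} (ha : a ∈ A)
    (hφ : φ a = 0) : span K (φ '' A) = (vectorSpan K A).map φ.linear := by
  rw [vectorSpan_eq_span_vsub_set_right K ha, Submodule.map_span, Set.image_image]
  simp only [AffineMap.linearMap_vsub, hφ, vsub_eq_sub, sub_zero]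

/-- The projective points spanned by the nonzero values of `f` on `A`. -/
def projectiveImage (K : Type*) [Field K] [Module K W] (f : P → W) (A : Set P) : Set (ℙ K W) :=
  {x | ∃ p ∈ A, span K {f p} = x.submodule}

lemma finite_projectiveImage {A : Set P} (hA : A.Finite) (f : P → W) :
    (projectiveImage K f A).Finite :=
  Set.Finite.preimage (f := Projectivization.submodule)
    Projectivization.submodule_injective.injOn (hA.image fun p => span K {f p})

lemma iSup_submodule_projectiveImage (f : P → W) (A : Set P) :
    ⨆ x ∈ projectiveImage K f A, x.submodule = span K (f '' A) := by
  refine le_antisymm (iSup₂_le ?_) (span_le.mpr ?_)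
  · rintro x ⟨p, hp, hx⟩
    rw [← hx]
    exact span_mono (by simpa using ⟨p, hp, rfl⟩)
  · rintro _ ⟨p, hp, rfl⟩
    by_cases hp0 : f p = 0
    · simp [hp0]
    · exact Submodule.mem_iSup_of_mem (.mk K (f p) hp0) <| Submodule.mem_iSup_of_mem
        ⟨p, hp, rfl⟩ (mem_span_singleton_self _)

/-- The line through any points of two of the sets `S i` meets a third one, different from
both. -/
def HasThirdSetOnLines (K : Type*) [Field K] [Module K V] (S : ι → Set P) : Prop :=
  ∀ i j, i ≠ j → ∀ p ∈ S i, ∀ q ∈ S j,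
    ∃ k, k ≠ i ∧ k ≠ j ∧ ∃ c : K, AffineMap.lineMap p q c ∈ S k

variable {S : ι → Set P}

lemma exists_line_encard_eq_two_of_not_hasThirdSetOnLines
    (hdisj : ∀ i j, i ≠ j → Disjoint (S i) (S j)) (h : ¬ HasThirdSetOnLines K S) :
    ∃ ℓ : AffineSubspace K P, Module.finrank K ℓ.direction = 1 ∧
      {i | ((ℓ : Set P) ∩ S i).Nonempty}.encard = 2 := by
  simp only [HasThirdSetOnLines, not_forall] at h
  obtain ⟨i, j, hij, p, hp, q, hq, hno⟩ := h
  have hpq : q ≠ p := fun h => Set.disjoint_left.mp (hdisj i j hij) hp (h ▸ hq)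
  have hmeet : {k | ((line[K, p, q] : Set P) ∩ S k).Nonempty} = {i, j} := by
    ext k
    constructor
    · rintro ⟨z, hz, hzk⟩
      by_contra hk
      simp only [Set.mem_insert_iff, Set.mem_singleton_iff, not_or] at hk
      obtain ⟨c, rfl⟩ := mem_affineSpan_pair_iff_exists_lineMap_eq.mp hz
      exact hno ⟨k, hk.1, hk.2, c, hzk⟩
    · rintro (rfl | rfl)
      · exact ⟨p, left_mem_affineSpan_pair K p q, hp⟩
      · exact ⟨q, right_mem_affineSpan_pair K p q, hq⟩
  refine ⟨line[K, p, q], ?_, by rw [hmeet, Set.encard_pair hij]⟩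
  rw [direction_affineSpan, vectorSpan_pair_rev]
  exact finrank_span_singleton (vsub_ne_zero.mpr hpq)

namespace HasThirdSetOnLines

lemma exists_lineMap_mem (h : HasThirdSetOnLines K S)
    (hdisj : ∀ i j, i ≠ j → Disjoint (S i) (S j)) {i j : ι} (hij : i ≠ j) {p q : P}
    (hp : p ∈ S i) (hq : q ∈ S j) :
    ∃ k, k ≠ i ∧ ∃ c : K, c ≠ 0 ∧ c ≠ 1 ∧ AffineMap.lineMap p q c ∈ S k := by
  obtain ⟨k, hki, hkj, c, hc⟩ := h i j hij p hp q hq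
  refine ⟨k, hki, c, ?_, ?_, hc⟩
  · rintro rfl
    exact Set.disjoint_left.mp (hdisj k i hki) (by simpa using hc) hp
  · rintro rfl
    exact Set.disjoint_left.mp (hdisj k j hkj) (by simpa using hc) hq

lemma exists_ne_span_eq (h : HasThirdSetOnLines K S)
    (hdisj : ∀ i j, i ≠ j → Disjoint (S i) (S j)) {φ : P →ᵃ[K] W} {i j : ι} (hij : i ≠ j)
    {p d : P} (hp : p ∈ S i) (hd : d ∈ S j) (hφd : φ d = 0) :
    ∃ k, k ≠ i ∧ ∃ q ∈ S k, span K {φ q} = span K {φ p} := by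
  obtain ⟨k, hki, c, -, hc, hz⟩ := h.exists_lineMap_mem hdisj hij hp hd
  refine ⟨k, hki, _, hz, ?_⟩
  rw [AffineMap.apply_lineMap, hφd, AffineMap.lineMap_apply_module, smul_zero, add_zero]
  exact Submodule.span_singleton_smul_eq (sub_ne_zero.mpr hc.symm).isUnit _

theorem isSylvesterGallai_projectiveImage (h : HasThirdSetOnLines K S)
    (hdisj : ∀ i j, i ≠ j → Disjoint (S i) (S j)) {φ : P →ᵃ[K] W}
    (hφ : {i | ∃ d ∈ S i, φ d = 0}.Nontrivial) :
    IsSylvesterGallai (projectiveImage K φ (⋃ i, S i)) := by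
  rintro x ⟨p, hpS, hpx⟩ y ⟨q₀, hq₀S, hq₀y⟩ hxy
  obtain ⟨i, hp⟩ := Set.mem_iUnion.mp hpS
  obtain ⟨i₀, hq₀⟩ := Set.mem_iUnion.mp hq₀S
  -- If `p` and `q₀` lie in the same set, trade `q₀` for a point of another one with the same image.
  obtain ⟨j, hij, q, hq, hqy⟩ : ∃ j, i ≠ j ∧ ∃ q ∈ S j, span K {φ q} = y.submodule := by
    rcases eq_or_ne i i₀ with rfl | hne
    · obtain ⟨j, ⟨d, hd, hφd⟩, hji⟩ := hφ.exists_ne i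
      obtain ⟨k, hki, q, hq, hqq₀⟩ := h.exists_ne_span_eq hdisj hji.symm hq₀ hd hφd
      exact ⟨k, hki.symm, q, hq, hqq₀.trans hq₀y⟩
    · exact ⟨i₀, hne, q₀, hq₀, hq₀y⟩
  obtain ⟨k, -, c, hc0, hc1, hz⟩ := h.exists_lineMap_mem hdisj hij hp hq
  have hφz : φ (AffineMap.lineMap p q c) = (1 - c) • φ p + c • φ q := by
    rw [AffineMap.apply_lineMap, AffineMap.lineMap_apply_module]
  have hpmem : φ p ∈ x.submodule := hpx ▸ mem_span_singleton_self _
  have hqmem : φ q ∈ y.submodule := hqy ▸ mem_span_singleton_self _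
  have hzx : φ (AffineMap.lineMap p q c) ∉ x.submodule :=
    hφz ▸ smul_add_smul_notMem hxy hpmem hqy (1 - c) hc0
  have hzy : φ (AffineMap.lineMap p q c) ∉ y.submodule := by
    rw [hφz, add_comm]
    exact smul_add_smul_notMem hxy.symm hqmem hpx c (sub_ne_zero.mpr hc1.symm)
  have hz0 : φ (AffineMap.lineMap p q c) ≠ 0 := fun h0 => hzx (h0 ▸ Submodule.zero_mem _)
  refine ⟨.mk K _ hz0, ⟨_, Set.mem_iUnion_of_mem k hz, rfl⟩, ?_, ?_, ?_⟩
  · rintro rfl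
    exact hzx (mem_span_singleton_self _)
  · rintro rfl
    exact hzy (mem_span_singleton_self _)
  · rw [Projectivization.submodule_mk, Submodule.span_singleton_le_iff_mem, hφz]
    exact Submodule.add_mem_sup (Submodule.smul_mem _ _ hpmem) (Submodule.smul_mem _ _ hqmem)

end HasThirdSetOnLines

end Projection

theorem affine_sets_span_five_exists_line_meeting_exactly_two_general
    {𝕜 V P ι : Type*} [RCLike 𝕜] [AddCommGroup V] [Module 𝕜 V] [AddTorsor V P]
    (S : ι → Set P) (hdisj : ∀ i j, i ≠ j → Disjoint (S i) (S j))
    (hne : {i | (S i).Nonempty}.Nontrivial) (hfin : (⋃ i, S i).Finite)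
    (hdim : 5 ≤ Module.finrank 𝕜 (affineSpan 𝕜 (⋃ i, S i)).direction) :
    ∃ ℓ : AffineSubspace 𝕜 P, Module.finrank 𝕜 ℓ.direction = 1 ∧
      {i | ((ℓ : Set P) ∩ S i).Nonempty}.encard = 2 := by
  by_contra hno
  have hthird : HasThirdSetOnLines 𝕜 S := not_not.mp
    (mt (exists_line_encard_eq_two_of_not_hasThirdSetOnLines hdisj) hno)
  obtain ⟨i, ⟨a, ha⟩, j, ⟨b, hb⟩, hij⟩ := hne
  obtain ⟨φ, hφa, hφb, hφ⟩ := exists_affineMap_eq_zero_linear_eq_mkQ (K := 𝕜) a b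
  have hSG : IsSylvesterGallai (projectiveImage 𝕜 φ (⋃ i, S i)) :=
    hthird.isSylvesterGallai_projectiveImage hdisj ⟨i, ⟨a, ha, hφa⟩, j, ⟨b, hb, hφb⟩, hij⟩
  have himage := hSG.finrank_iSup_submodule_le_three (finite_projectiveImage hfin φ)
  rw [iSup_submodule_projectiveImage,
    span_image_eq_map_vectorSpan φ (Set.mem_iUnion_of_mem i ha) hφa, hφ] at himage
  rw [direction_affineSpan] at hdim
  have := finiteDimensional_vectorSpan_of_finite 𝕜 hfin
  have hquot := finrank_le_finrank_map_mkQ_add_finrank (vectorSpan 𝕜 (⋃ i, S i))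
    (Submodule.span 𝕜 {b -ᵥ a})
  have hker : Module.finrank 𝕜 (Submodule.span 𝕜 {b -ᵥ a}) ≤ 1 := by
    simpa using finrank_span_le_card (R := 𝕜) {b -ᵥ a}
  omega

/-- If `S₁, …, Sₘ` (m ≥ 2) are pairwise disjoint non-empty finite subsets of the affine
space `ℂⁿ` whose union affinely spans a subspace of dimension at least `5`, then there is an
affine line meeting exactly two of the sets. -/
theorem affine_sets_span_five_exists_line_meeting_exactly_two
    (n m : ℕ) (hm : 2 ≤ m) (S : Fin m → Set (Fin n → ℂ))
    (hdisj : ∀ i j, i ≠ j → Disjoint (S i) (S j))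
    (hne : ∀ i, (S i).Nonempty) (hfin : ∀ i, (S i).Finite)
    (hdim : 5 ≤ Module.finrank ℂ (affineSpan ℂ (⋃ i, S i)).direction) :
    ∃ ℓ : AffineSubspace ℂ (Fin n → ℂ), Module.finrank ℂ ℓ.direction = 1 ∧
      {i : Fin m | ((ℓ : Set (Fin n → ℂ)) ∩ S i).Nonempty}.encard = 2 :=
  affine_sets_span_five_exists_line_meeting_exactly_two_general S hdisj
    ⟨⟨0, by omega⟩, hne _, ⟨1, by omega⟩, hne _, by simp⟩ (Set.finite_iUnion hfin) hdim
end

section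
/- Let C = F_1 + F_2 + F_3 be a simple homogeneous ΣΠΣΠ(3,2) circuit over ℂ as above: each F_i = l_{i1} ⋯ l_{i d_i} is a product of irreducible homogeneous polynomials l_{ij} of degree 1 or 2, the F_i are homogeneous of the same degree, gcd(F_1, F_2, F_3) = 1, C is SG (for every i and every choice of one factor from each of the two branches j ≠ i, F_i lies in the ideal generated by the two chosen factors), every ideal generated by two degree-2 factors from different branches is prime, and not all degree-2 factors lie in one branch. Define L to be the set of degree-1 factors l_{ij} for which there exists a degree-1 factor l_{kt} with k ≠ i such that the ideal ⟨l_{ij}, l_{kt}⟩ contains some degree-2 factor l_{fu} with f ∉ {i, k}. Then the ℂ-linear span of L has dimension at most 6. -/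
/-!
If `a` is a linear factor of one branch and `Q` a quadratic factor of another, then `⟨a, Q⟩` is not
prime: otherwise the SG condition puts a factor of the third branch into it, and comparing degrees
contradicts either coprimality or the primality of the ideals of two quadratic factors. Hence `Q`
restricted to the hyperplane `a = 0` is reducible, i.e. `Q = m * a + u * v` with linear forms `m`,
`u`, `v`. As `Q` is irreducible, every other linear form `b` such that `Q` is reducible on `b = 0`
lies in the span of `a`, `m`, `u`, `v`, since otherwise a projection along `b` fixes `Q` and factors
it. As every branch has a quadratic factor, the linear factors of any two branches together span at
most four dimensions, and submodularity of dimension bounds the span of all three branches by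
`(4 + 4 + 4) / 2 = 6`.
-/

section LinearAlgebra

variable {K V : Type*} [Field K] [AddCommGroup V] [Module K V]

lemma exists_dual_eq_one_of_notMem {W : Submodule K V} {b : V} (hb : b ∉ W) :
    ∃ f : Module.Dual K V, f b = 1 ∧ ∀ w ∈ W, f w = 0 := by
  obtain ⟨g, hgb, hgW⟩ := Submodule.exists_le_ker_of_notMem hb
  exact ⟨(g b)⁻¹ • g, by simp [hgb], fun w hw => by simp [LinearMap.mem_ker.1 (hgW hw)]⟩

lemma two_mul_finrank_sup_sup_le (A B E : Submodule K V)
    [FiniteDimensional K A] [FiniteDimensional K B] [FiniteDimensional K E] :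
    2 * Module.finrank K ↥(A ⊔ B ⊔ E) ≤
      Module.finrank K ↥(A ⊔ B) + Module.finrank K ↥(A ⊔ E) + Module.finrank K ↥(B ⊔ E) := by
  have h₁ := Submodule.finrank_sup_add_finrank_inf_eq (A ⊔ B) (A ⊔ E)
  have h₂ := Submodule.finrank_add_le_finrank_add_finrank A (B ⊔ E)
  have hA : Module.finrank K A ≤ Module.finrank K ↥((A ⊔ B) ⊓ (A ⊔ E)) :=
    Submodule.finrank_mono (le_inf le_sup_left le_sup_left)
  rw [← sup_sup_distrib_left, ← sup_assoc] at h₁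
  rw [← sup_assoc] at h₂
  omega

end LinearAlgebra

section Homogeneous

open MvPolynomial

variable {σ R : Type*} [CommSemiring R]

lemma homogeneousComponent_mul_of_isHomogeneous {m : ℕ} (n : ℕ) (p : MvPolynomial σ R)
    {q : MvPolynomial σ R} (hq : q.IsHomogeneous m) :
    homogeneousComponent n (p * q) =
      if m ≤ n then homogeneousComponent (n - m) p * q else 0 := by
  let _ := gradedAlgebra (σ := σ) (R := R)
  have hdecompose (r : MvPolynomial σ R) (i : ℕ) :
      (DirectSum.decompose (homogeneousSubmodule σ R) r i : MvPolynomial σ R) =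
        homogeneousComponent i r := decomposition.decompose'_apply r i
  simpa only [hdecompose] using
    DirectSum.coe_decompose_mul_of_right_mem (a := p) (homogeneousSubmodule σ R) n hq

lemma homogeneousComponent_totalDegree_add_mul (p q : MvPolynomial σ R) :
    homogeneousComponent (p.totalDegree + q.totalDegree) (p * q) =
      homogeneousComponent p.totalDegree p * homogeneousComponent q.totalDegree q := by
  conv_lhs => enter [2, 2]; rw [← sum_homogeneousComponent q]
  rw [Finset.mul_sum, map_sum, Finset.sum_eq_single q.totalDegree]
  · rw [homogeneousComponent_mul_of_isHomogeneous _ _ (homogeneousComponent_isHomogeneous _ _),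
      if_pos (Nat.le_add_left _ _), Nat.add_sub_cancel]
  · intro i hi hne
    have hlt : i < q.totalDegree := by grind
    rw [homogeneousComponent_mul_of_isHomogeneous _ _ (homogeneousComponent_isHomogeneous _ _),
      if_pos (by omega), homogeneousComponent_eq_zero _ _ (by omega), zero_mul]
  · simp

lemma exists_homogeneous_coeffs_of_mem_span_pair {i j n : ℕ} {a b c : MvPolynomial σ R}
    (ha : a.IsHomogeneous i) (hb : b.IsHomogeneous j) (hc : c.IsHomogeneous n)
    (hmem : c ∈ Ideal.span {a, b}) :
    ∃ p q : MvPolynomial σ R, (p.IsHomogeneous (n - i) ∧ (n < i → p = 0)) ∧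
      (q.IsHomogeneous (n - j) ∧ (n < j → q = 0)) ∧ p * a + q * b = c := by
  have coeff {k : ℕ} {r : MvPolynomial σ R} (hr : r.IsHomogeneous k) (s : MvPolynomial σ R) :
      ∃ t : MvPolynomial σ R, (t.IsHomogeneous (n - k) ∧ (n < k → t = 0)) ∧
        homogeneousComponent n (s * r) = t * r := by
    rw [homogeneousComponent_mul_of_isHomogeneous n s hr]
    split_ifs with hk
    · exact ⟨_, ⟨homogeneousComponent_isHomogeneous _ _, fun h => absurd h hk.not_gt⟩, rfl⟩
    · exact ⟨0, ⟨isHomogeneous_zero _ _ _, fun _ => rfl⟩, (zero_mul r).symm⟩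
  obtain ⟨s, t, hst⟩ := Ideal.mem_span_pair.1 hmem
  obtain ⟨p, hp, hpa⟩ := coeff ha s
  obtain ⟨q, hq, hqb⟩ := coeff hb t
  refine ⟨p, q, hp, hq, ?_⟩
  rw [← hpa, ← hqb, ← map_add, hst, homogeneousComponent_eq_self hc]

lemma eq_zero_of_mem_span_pair_of_lt {i j n : ℕ} {a b c : MvPolynomial σ R}
    (ha : a.IsHomogeneous i) (hb : b.IsHomogeneous j) (hc : c.IsHomogeneous n)
    (hni : n < i) (hnj : n < j) (hmem : c ∈ Ideal.span {a, b}) : c = 0 := by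
  obtain ⟨p, q, ⟨-, hp⟩, ⟨-, hq⟩, rfl⟩ := exists_homogeneous_coeffs_of_mem_span_pair ha hb hc hmem
  rw [hp hni, hq hnj, zero_mul, zero_mul, add_zero]

lemma dvd_of_mem_span_pair_of_lt {i j n : ℕ} {a b c : MvPolynomial σ R}
    (ha : a.IsHomogeneous i) (hb : b.IsHomogeneous j) (hc : c.IsHomogeneous n)
    (hnj : n < j) (hmem : c ∈ Ideal.span {a, b}) : a ∣ c := by
  obtain ⟨p, q, -, ⟨-, hq⟩, rfl⟩ := exists_homogeneous_coeffs_of_mem_span_pair ha hb hc hmem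
  rw [hq hnj, zero_mul, add_zero]
  exact dvd_mul_left a p

lemma exists_isHomogeneous_mul_eq_of_dvd {i n : ℕ} {a c : MvPolynomial σ R}
    (ha : a.IsHomogeneous i) (hc : c.IsHomogeneous n) (hac : a ∣ c) :
    ∃ m : MvPolynomial σ R, m.IsHomogeneous (n - i) ∧ m * a = c := by
  have hmem : c ∈ Ideal.span {a, 0} := by
    rwa [Ideal.span_pair_zero, Ideal.mem_span_singleton]
  obtain ⟨m, q, ⟨hm, -⟩, -, hmc⟩ :=
    exists_homogeneous_coeffs_of_mem_span_pair ha (isHomogeneous_zero σ R 0) hc hmem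
  exact ⟨m, hm, by rwa [mul_zero, add_zero] at hmc⟩

end Homogeneous

section Projection

open MvPolynomial

variable {σ R : Type*} [CommRing R]

/-- The substitution `X i ↦ X i - f (X i) • a`. When `a` is a linear form with `f a = 1`, it is the
projection along `a` of the linear forms onto the kernel of `f`, extended to all polynomials; it
restricts polynomials to the hyperplane `a = 0`. -/
noncomputable def projAlong (f : Module.Dual R (MvPolynomial σ R)) (a : MvPolynomial σ R) :
    MvPolynomial σ R →ₐ[R] MvPolynomial σ R :=
  aeval fun i => X i - f (X i) • a

variable {f : Module.Dual R (MvPolynomial σ R)} {a p : MvPolynomial σ R}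

lemma projAlong_apply_of_isHomogeneous_one (hp : p.IsHomogeneous 1) :
    projAlong f a p = p - f p • a := by
  let g : MvPolynomial σ R →ₗ[R] MvPolynomial σ R := LinearMap.id - f.smulRight a
  have hX : Set.EqOn (projAlong f a).toLinearMap g (Set.range X) := by
    rintro _ ⟨i, rfl⟩
    simp [projAlong, g]
  refine LinearMap.eqOn_span hX (?_ : p ∈ Submodule.span R (Set.range X))
  rwa [← homogeneousSubmodule_one_eq_span_X]

lemma projAlong_self_eq_zero (ha : a.IsHomogeneous 1) (hfa : f a = 1) : projAlong f a a = 0 := by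
  rw [projAlong_apply_of_isHomogeneous_one ha, hfa, one_smul, sub_self]

lemma projAlong_eq_self_of_dual_eq_zero (hp : p.IsHomogeneous 1) (hfp : f p = 0) :
    projAlong f a p = p := by
  rw [projAlong_apply_of_isHomogeneous_one hp, hfp, zero_smul, sub_zero]

lemma isHomogeneous_projAlong {m : ℕ} (ha : a.IsHomogeneous 1) (hp : p.IsHomogeneous m) :
    (projAlong f a p).IsHomogeneous m := by
  have hX (i : σ) : (X i - f (X i) • a).IsHomogeneous 1 :=
    (isHomogeneous_X R i).sub (smul_eq_C_mul a (f (X i)) ▸ ha.C_mul _)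
  simpa only [one_mul, projAlong] using hp.aeval _ hX

lemma dvd_sub_projAlong (f : Module.Dual R (MvPolynomial σ R)) (a p : MvPolynomial σ R) :
    a ∣ p - projAlong f a p := by
  rw [← Ideal.mem_span_singleton, ← Ideal.Quotient.eq]
  let π := Ideal.Quotient.mkₐ R (Ideal.span {a})
  have hπa : π a = 0 := Ideal.Quotient.eq_zero_iff_mem.2 (Ideal.mem_span_singleton_self a)
  have hπ : π = π.comp (projAlong f a) := by
    refine algHom_ext fun i => ?_
    simp [projAlong, hπa]
  exact DFunLike.congr_fun hπ p

lemma comap_projAlong_span_singleton (ha : a.IsHomogeneous 1) (hfa : f a = 1)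
    (Q : MvPolynomial σ R) :
    (Ideal.span {projAlong f a Q}).comap (projAlong f a) = Ideal.span {a, Q} := by
  refine le_antisymm (fun p hp => ?_) (Ideal.span_le.2 ?_)
  · obtain ⟨c, hc⟩ := Ideal.mem_span_singleton.1 (Ideal.mem_comap.1 hp)
    obtain ⟨e, he⟩ := dvd_sub_projAlong f a p
    obtain ⟨e', he'⟩ := dvd_sub_projAlong f a Q
    exact Ideal.mem_span_pair.2 ⟨e - e' * c, c, by linear_combination c * he' - he - hc⟩
  · rintro p (rfl | rfl)
    · simp [projAlong_self_eq_zero ha hfa]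
    · exact Ideal.mem_span_singleton_self _

end Projection

section Splitting

open MvPolynomial

variable {σ K : Type*} [Field K]

lemma isUnit_iff_totalDegree_eq_zero {p : MvPolynomial σ K} (hp : p ≠ 0) :
    IsUnit p ↔ p.totalDegree = 0 := by
  refine ⟨fun h => (isUnit_iff_totalDegree_of_isReduced.1 h).2, fun h => ?_⟩
  rw [totalDegree_eq_zero_iff_eq_C] at h
  rw [h, ne_eq, C_eq_zero] at hp
  rw [h]
  exact (isUnit_iff_ne_zero.2 hp).map C

lemma not_isUnit_of_isHomogeneous {R : Type*} [CommRing R] [IsReduced R] [Nontrivial R]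
    {p : MvPolynomial σ R} {m : ℕ} (hp : p.IsHomogeneous m) (hm : m ≠ 0) : ¬IsUnit p := fun hu =>
  hm ((hp.totalDegree hu.ne_zero).symm.trans (isUnit_iff_totalDegree_of_isReduced.1 hu).2)

lemma exists_linear_factors_of_not_irreducible {p : MvPolynomial σ K} (hp : p.IsHomogeneous 2)
    (hp0 : p ≠ 0) (hirr : ¬Irreducible p) :
    ∃ u v : MvPolynomial σ K, u.IsHomogeneous 1 ∧ v.IsHomogeneous 1 ∧ p = u * v := by
  rw [irreducible_iff] at hirr
  push Not at hirr
  obtain ⟨u, v, rfl, hu, hv⟩ := hirr (not_isUnit_of_isHomogeneous hp two_ne_zero)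
  have hu0 : u ≠ 0 := left_ne_zero_of_mul hp0
  have hv0 : v ≠ 0 := right_ne_zero_of_mul hp0
  have hsum : u.totalDegree + v.totalDegree = 2 := by
    rw [← totalDegree_mul_of_isDomain hu0 hv0, hp.totalDegree hp0]
  rw [isUnit_iff_totalDegree_eq_zero hu0] at hu
  rw [isUnit_iff_totalDegree_eq_zero hv0] at hv
  have hdu : u.totalDegree = 1 := by omega
  have hdv : v.totalDegree = 1 := by omega
  have htop := homogeneousComponent_totalDegree_add_mul u v
  rw [hdu, hdv, homogeneousComponent_eq_self hp] at htop
  exact ⟨_, _, homogeneousComponent_isHomogeneous 1 u, homogeneousComponent_isHomogeneous 1 v, htop⟩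

lemma nonempty_of_isHomogeneous_prod {κ : Type*} {ι : κ → Type*} [∀ i, Fintype (ι i)]
    {l : (i : κ) → ι i → MvPolynomial σ K} {D : ℕ} (hhom : ∀ i, (∏ x, l i x).IsHomogeneous D)
    {i : κ} (hirr : ∀ x, Irreducible (l i x)) (x : ι i) (k : κ) : Nonempty (ι k) := by
  by_contra hk
  rw [not_nonempty_iff] at hk
  have hone : (1 : MvPolynomial σ K).IsHomogeneous D := by
    simpa only [Finset.univ_eq_empty, Finset.prod_empty] using hhom k
  obtain rfl : D = 0 := hone.inj_right (isHomogeneous_one σ K) one_ne_zero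
  have hunit : IsUnit (∏ y, l i y) :=
    (isUnit_iff_totalDegree_eq_zero (Finset.prod_ne_zero_iff.2 fun y _ => (hirr y).ne_zero)).2
      ((totalDegree_zero_iff_isHomogeneous σ).2 (hhom i))
  exact (hirr x).not_isUnit
    (isUnit_of_dvd_unit (Finset.dvd_prod_of_mem _ (Finset.mem_univ x)) hunit)

/-- The restriction of the quadratic form `Q` to the hyperplane `a = 0` is a product of two linear
forms. The restriction is encoded by a lift: `Q` agrees with `u * v` up to a multiple of `a`. -/
def SplitsOnHyperplane (Q a : MvPolynomial σ K) : Prop :=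
  ∃ m u v : MvPolynomial σ K, m.IsHomogeneous 1 ∧ u.IsHomogeneous 1 ∧ v.IsHomogeneous 1 ∧
    Q = m * a + u * v

variable {a b Q : MvPolynomial σ K}

lemma splitsOnHyperplane_of_not_isPrime (ha : a.IsHomogeneous 1) (ha0 : a ≠ 0)
    (hQ : Q.IsHomogeneous 2) (hprime : ¬(Ideal.span {a, Q}).IsPrime) :
    SplitsOnHyperplane Q a := by
  obtain ⟨f, hfa⟩ := Module.Projective.exists_dual_eq_one K ha0
  have hQ' : (projAlong f a Q).IsHomogeneous 2 := isHomogeneous_projAlong ha hQ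
  have hnot : ¬(Ideal.span {projAlong f a Q}).IsPrime := fun h =>
    hprime (comap_projAlong_span_singleton ha hfa Q ▸ h.comap (projAlong f a))
  have hne : projAlong f a Q ≠ 0 := fun h => hnot (by
    rw [h, Ideal.span_singleton_zero]
    exact Ideal.isPrime_bot)
  rw [Ideal.span_singleton_prime hne, ← irreducible_iff_prime] at hnot
  obtain ⟨u, v, hu, hv, huv⟩ := exists_linear_factors_of_not_irreducible hQ' hne hnot
  obtain ⟨m, hm, hma⟩ :=
    exists_isHomogeneous_mul_eq_of_dvd ha (hQ.sub hQ') (dvd_sub_projAlong f a Q)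
  exact ⟨m, u, v, hm, hu, hv, by linear_combination huv - hma⟩

lemma mem_span_of_splitsOnHyperplane {m u v : MvPolynomial σ K} (hQ : Irreducible Q)
    (ha : a.IsHomogeneous 1) (hm : m.IsHomogeneous 1) (hu : u.IsHomogeneous 1)
    (hv : v.IsHomogeneous 1) (hQa : Q = m * a + u * v)
    (hb : b.IsHomogeneous 1) (hQb : SplitsOnHyperplane Q b) :
    b ∈ Submodule.span K (Set.range ![a, m, u, v]) := by
  by_contra hnotMem
  obtain ⟨f, hfb, hf⟩ := exists_dual_eq_one_of_notMem hnotMem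
  have hfix (i : Fin 4) (hi : (![a, m, u, v] i).IsHomogeneous 1) :
      projAlong f b (![a, m, u, v] i) = ![a, m, u, v] i :=
    projAlong_eq_self_of_dual_eq_zero hi (hf _ (Submodule.subset_span ⟨i, rfl⟩))
  have hfixQ : projAlong f b Q = Q := by
    rw [hQa, map_add, map_mul, map_mul]
    exact congrArg₂ _ (congrArg₂ _ (hfix 1 hm) (hfix 0 ha)) (congrArg₂ _ (hfix 2 hu) (hfix 3 hv))
  obtain ⟨m', u', v', -, hu', hv', hQ'⟩ := hQb
  have hfactor : Q = projAlong f b u' * projAlong f b v' := by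
    rw [← hfixQ, hQ', map_add, map_mul, map_mul, projAlong_self_eq_zero hb hfb, mul_zero, zero_add]
  rcases hQ.isUnit_or_isUnit hfactor with h | h
  · exact not_isUnit_of_isHomogeneous (isHomogeneous_projAlong hb hu') one_ne_zero h
  · exact not_isUnit_of_isHomogeneous (isHomogeneous_projAlong hb hv') one_ne_zero h

lemma finrank_span_le_four_of_splitsOnHyperplane (hQ : Irreducible Q)
    {S : Set (MvPolynomial σ K)} (hS : ∀ a ∈ S, a.IsHomogeneous 1 ∧ SplitsOnHyperplane Q a) :
    Module.finrank K ↥(Submodule.span K S) ≤ 4 := by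
  rcases S.eq_empty_or_nonempty with rfl | ⟨a, ha⟩
  · rw [Submodule.span_empty, finrank_bot]
    exact Nat.zero_le 4
  obtain ⟨ha, m, u, v, hm, hu, hv, hQa⟩ := hS a ha
  have hspan : Submodule.span K S ≤ Submodule.span K (Set.range ![a, m, u, v]) :=
    Submodule.span_le.2 fun b hb =>
      mem_span_of_splitsOnHyperplane hQ ha hm hu hv hQa (hS b hb).1 (hS b hb).2
  have : FiniteDimensional K (Submodule.span K (Set.range ![a, m, u, v])) :=
    FiniteDimensional.span_of_finite K (Set.finite_range _)
  exact (Submodule.finrank_mono hspan).trans (finrank_range_le_card ![a, m, u, v])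

end Splitting

section Circuit

open MvPolynomial

variable {σ K : Type*} [Field K] {ι : Fin 3 → Type*}

lemma exists_third_index {i j : Fin 3} (hij : i ≠ j) :
    ∃ k, k ≠ i ∧ k ≠ j ∧ ∀ w, w = i ∨ w = j ∨ w = k := by
  decide +revert

/-- The span of the degree-1 factors of branch `i`. -/
noncomputable def linearFactorSpan (l : (i : Fin 3) → ι i → MvPolynomial σ K) (i : Fin 3) :
    Submodule K (MvPolynomial σ K) :=
  Submodule.span K {p | p ∈ Set.range (l i) ∧ p.IsHomogeneous 1}

instance [∀ i, Finite (ι i)] (l : (i : Fin 3) → ι i → MvPolynomial σ K) (i : Fin 3) :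
    FiniteDimensional K (linearFactorSpan l i) :=
  FiniteDimensional.span_of_finite K ((Set.finite_range (l i)).subset fun _ hp => hp.1)

variable [∀ i, Fintype (ι i)]

lemma prod_mem_span_pair_of_forall_choice {R : Type*} [CommSemiring R] [∀ i, Nonempty (ι i)]
    {l : (i : Fin 3) → ι i → R} {i j k : Fin 3}
    (hSG : ∀ s : ∀ w, ι w, ∏ z, l k z ∈ Ideal.span {p : R | ∃ w, w ≠ k ∧ p = l w (s w)})
    (hij : i ≠ j) (hki : k ≠ i) (hkj : k ≠ j) (x : ι i) (y : ι j) :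
    ∏ z, l k z ∈ Ideal.span {l i x, l j y} := by
  let s₀ : ∀ w, ι w := fun w => Classical.arbitrary (ι w)
  let s := Function.update (Function.update s₀ i x) j y
  have hsi : s i = x := by simp [s, Function.update_of_ne hij]
  have hsj : s j = y := by simp [s]
  refine Ideal.span_mono ?_ (hSG s)
  rintro _ ⟨w, hwk, rfl⟩
  obtain rfl | rfl : w = i ∨ w = j := by omega
  · exact Or.inl (by rw [hsi])
  · exact Or.inr (by rw [hsj]; rfl)

/-- A simple SG circuit `F₀ + F₁ + F₂` with `Fᵢ = ∏ x, l i x`, given by the irreducible factors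
`l i x` of its branches, in which the ideals of two degree-2 factors from different branches are
prime and the degree-2 factors do not all lie in one branch. -/
structure IsSGCircuit (l : (i : Fin 3) → ι i → MvPolynomial σ K) : Prop where
  irreducible : ∀ i x, Irreducible (l i x)
  isHomogeneous : ∀ i x, (l i x).IsHomogeneous 1 ∨ (l i x).IsHomogeneous 2
  isUnit_of_forall_dvd : ∀ g : MvPolynomial σ K, (∀ i, g ∣ ∏ x, l i x) → IsUnit g
  prod_mem_span_pair : ∀ {i j k : Fin 3}, i ≠ j → k ≠ i → k ≠ j → ∀ (x : ι i) (y : ι j),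
    ∏ z, l k z ∈ Ideal.span {l i x, l j y}
  isPrime_span_pair : ∀ (i j : Fin 3) (x : ι i) (y : ι j), i ≠ j →
    (l i x).IsHomogeneous 2 → (l j y).IsHomogeneous 2 → (Ideal.span {l i x, l j y}).IsPrime
  exists_quadratic_pair : ∃ (i j : Fin 3) (x : ι i) (y : ι j), i ≠ j ∧
    (l i x).IsHomogeneous 2 ∧ (l j y).IsHomogeneous 2

namespace IsSGCircuit

variable {l : (i : Fin 3) → ι i → MvPolynomial σ K} (hl : IsSGCircuit l)
include hl

lemma not_dvd {i j : Fin 3} (hij : i ≠ j) (x : ι i) (y : ι j) : ¬l i x ∣ l j y := by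
  intro hdvd
  obtain ⟨k, hki, hkj, hcover⟩ := exists_third_index hij
  have hk : l i x ∣ ∏ z, l k z := by
    obtain ⟨p, q, hpq⟩ := Ideal.mem_span_pair.1 (hl.prod_mem_span_pair hij hki hkj x y)
    exact hpq ▸ dvd_add (dvd_mul_left _ p) (hdvd.mul_left q)
  refine (hl.irreducible i x).not_isUnit (hl.isUnit_of_forall_dvd _ fun w => ?_)
  rcases hcover w with rfl | rfl | rfl
  · exact Finset.dvd_prod_of_mem _ (Finset.mem_univ x)
  · exact hdvd.trans (Finset.dvd_prod_of_mem _ (Finset.mem_univ y))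
  · exact hk

lemma exists_mem_span_pair_of_isPrime {i j k : Fin 3} (hij : i ≠ j) (hki : k ≠ i) (hkj : k ≠ j)
    {x : ι i} {y : ι j} (hprime : (Ideal.span {l i x, l j y}).IsPrime) :
    ∃ z, l k z ∈ Ideal.span {l i x, l j y} := by
  obtain ⟨z, -, hz⟩ := hprime.prod_mem_iff.1 (hl.prod_mem_span_pair hij hki hkj x y)
  exact ⟨z, hz⟩

lemma exists_quadratic_factor (k : Fin 3) : ∃ z, (l k z).IsHomogeneous 2 := by
  obtain ⟨i, j, x, y, hij, hx, hy⟩ := hl.exists_quadratic_pair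
  by_cases hki : k = i
  · exact hki ▸ ⟨x, hx⟩
  by_cases hkj : k = j
  · exact hkj ▸ ⟨y, hy⟩
  obtain ⟨z, hz⟩ :=
    hl.exists_mem_span_pair_of_isPrime hij hki hkj (hl.isPrime_span_pair i j x y hij hx hy)
  refine ⟨z, (hl.isHomogeneous k z).resolve_left fun hlin => (hl.irreducible k z).ne_zero ?_⟩
  exact eq_zero_of_mem_span_pair_of_lt hx hy hlin one_lt_two one_lt_two hz

lemma not_isPrime_span_linear_quadratic {i j : Fin 3} (hij : i ≠ j) {x : ι i} {y : ι j}
    (hx : (l i x).IsHomogeneous 1) (hy : (l j y).IsHomogeneous 2) :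
    ¬(Ideal.span {l i x, l j y}).IsPrime := by
  intro hprime
  obtain ⟨k, hki, hkj, -⟩ := exists_third_index hij
  obtain ⟨z, hz⟩ := hl.exists_mem_span_pair_of_isPrime hij hki hkj hprime
  rcases hl.isHomogeneous k z with hlin | hquad
  · exact hl.not_dvd hki.symm x z (dvd_of_mem_span_pair_of_lt hx hy hlin one_lt_two hz)
  obtain ⟨m, c, ⟨hm, -⟩, -, hmc⟩ := exists_homogeneous_coeffs_of_mem_span_pair hx hy hquad hz
  have hmem : m * l i x ∈ Ideal.span {l j y, l k z} :=
    Ideal.mem_span_pair.2 ⟨-c, 1, by linear_combination -hmc⟩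
  rcases (hl.isPrime_span_pair j k y z hkj.symm hy hquad).mem_or_mem hmem with h | h
  · have hm0 : m = 0 := eq_zero_of_mem_span_pair_of_lt hy hquad hm one_lt_two one_lt_two h
    rw [hm0, zero_mul, zero_add] at hmc
    exact hl.not_dvd hkj.symm y z (hmc ▸ dvd_mul_left _ c)
  · exact (hl.irreducible i x).ne_zero
      (eq_zero_of_mem_span_pair_of_lt hy hquad hx one_lt_two one_lt_two h)

lemma splitsOnHyperplane {i j : Fin 3} (hij : i ≠ j) {x : ι i} {y : ι j}
    (hx : (l i x).IsHomogeneous 1) (hy : (l j y).IsHomogeneous 2) :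
    SplitsOnHyperplane (l j y) (l i x) :=
  splitsOnHyperplane_of_not_isPrime hx (hl.irreducible i x).ne_zero hy
    (hl.not_isPrime_span_linear_quadratic hij hx hy)

lemma finrank_linearFactorSpan_sup_le_four {i j : Fin 3} (hij : i ≠ j) :
    Module.finrank K ↥(linearFactorSpan l i ⊔ linearFactorSpan l j) ≤ 4 := by
  obtain ⟨k, hki, hkj, -⟩ := exists_third_index hij
  obtain ⟨z, hz⟩ := hl.exists_quadratic_factor k
  rw [linearFactorSpan, linearFactorSpan, ← Submodule.span_union]
  refine finrank_span_le_four_of_splitsOnHyperplane (hl.irreducible k z) ?_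
  rintro _ (⟨⟨x, rfl⟩, hx⟩ | ⟨⟨y, rfl⟩, hy⟩)
  · exact ⟨hx, hl.splitsOnHyperplane hki.symm hx hz⟩
  · exact ⟨hy, hl.splitsOnHyperplane hkj.symm hy hz⟩

end IsSGCircuit

theorem span_of_L_dim_le_six_of_SG_circuit_general {l : (i : Fin 3) → ι i → MvPolynomial σ K}
    (hl : IsSGCircuit l) : Module.finrank K ↥(⨆ i, linearFactorSpan l i) ≤ 6 := by
  have hsub := two_mul_finrank_sup_sup_le (linearFactorSpan l 0) (linearFactorSpan l 1)
    (linearFactorSpan l 2)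
  have h₀₁ := hl.finrank_linearFactorSpan_sup_le_four (show (0 : Fin 3) ≠ 1 by decide)
  have h₀₂ := hl.finrank_linearFactorSpan_sup_le_four (show (0 : Fin 3) ≠ 2 by decide)
  have h₁₂ := hl.finrank_linearFactorSpan_sup_le_four (show (1 : Fin 3) ≠ 2 by decide)
  rw [iSup_fin_three]
  omega

end Circuit

/-- For a simple homogeneous SG `ΣΠΣΠ(3,2)` circuit `F₁ + F₂ + F₃` over `ℂ` as in the
paper, let `L` be the set of degree-1 factors `l i j` for which there is a degree-1
factor `l k t` with `k ≠ i` such that the ideal `⟨l i j, l k t⟩` contains some degree-2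
factor `l f u` with `f ∉ {i, k}`. Then the `ℂ`-linear span of `L` has dimension at
most `6`. -/
theorem span_of_L_dim_le_six_of_SG_circuit
    (n : ℕ) (d : Fin 3 → ℕ) (D : ℕ)
    (l : (i : Fin 3) → Fin (d i) → MvPolynomial (Fin (n + 1)) ℂ)
    (hirr : ∀ i j, Irreducible (l i j))
    (hdeg : ∀ i j, (l i j).IsHomogeneous 1 ∨ (l i j).IsHomogeneous 2)
    (hhom : ∀ i, (∏ j, l i j).IsHomogeneous D)
    (hsimple : ∀ g : MvPolynomial (Fin (n + 1)) ℂ, (∀ i, g ∣ ∏ j, l i j) → IsUnit g)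
    (hSG : ∀ (i : Fin 3) (s : ∀ j, Fin (d j)),
      (∏ j, l i j) ∈
        Ideal.span {p : MvPolynomial (Fin (n + 1)) ℂ | ∃ j, j ≠ i ∧ p = l j (s j)})
    (hprime : ∀ (i j : Fin 3) (k : Fin (d i)) (t : Fin (d j)), i ≠ j →
      (l i k).IsHomogeneous 2 → (l j t).IsHomogeneous 2 →
      (Ideal.span {l i k, l j t}).IsPrime)
    (hnotall : ∃ (i j : Fin 3) (k : Fin (d i)) (t : Fin (d j)), i ≠ j ∧
      (l i k).IsHomogeneous 2 ∧ (l j t).IsHomogeneous 2) :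
    Module.finrank ℂ
      ↥(Submodule.span ℂ
        {p : MvPolynomial (Fin (n + 1)) ℂ |
          ∃ (i : Fin 3) (j : Fin (d i)), p = l i j ∧ p.IsHomogeneous 1 ∧
            ∃ (k : Fin 3) (t : Fin (d k)), k ≠ i ∧ (l k t).IsHomogeneous 1 ∧
              ∃ (f : Fin 3) (u : Fin (d f)), f ≠ i ∧ f ≠ k ∧
                (l f u).IsHomogeneous 2 ∧
                l f u ∈ Ideal.span {p, l k t}}) ≤ 6 := by
  have hne : ∀ k, Nonempty (Fin (d k)) := by
    obtain ⟨i, -, x, -⟩ := hnotall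
    exact nonempty_of_isHomogeneous_prod hhom (hirr i) x
  have hl : IsSGCircuit l := ⟨hirr, hdeg, hsimple,
    fun {_ _ k} => prod_mem_span_pair_of_forall_choice (hSG k), hprime, hnotall⟩
  refine (Submodule.finrank_mono (Submodule.span_le.2 ?_)).trans
    (span_of_L_dim_le_six_of_SG_circuit_general hl)
  rintro p ⟨i, j, rfl, hlin, -⟩
  exact Submodule.mem_iSup_of_mem i (Submodule.subset_span ⟨⟨j, rfl⟩, hlin⟩)
end

section
/- Let Q be a quadratic form on ℂ^n of rank exactly 3 (i.e., Q(x) = xᵀ A x for a symmetric complex matrix A with rank(A) = 3), and let S be a set of non-zero linear functionals on ℂ^n such that for every l ∈ S the restriction of Q to the hyperplane ker l is a quadratic form of rank at most 2 (equivalently, the restriction is a product of two linear forms). Then the ℂ-linear span of S has dimension at most 3. -/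
/-!
A vector in the radical of `Q` outside the hyperplane `ker l` spans a complement of `ker l`, so in
its presence `Q` and its restriction to `ker l` have the same rank. A product of two linear forms
has rank at most `2 < rank Q`; hence every `l ∈ S` vanishes on the radical of `Q`, and the
annihilator of the radical has dimension `rank Q`.
-/

open Module
open scoped Matrix

section CommRing

variable {R M : Type*} [CommRing R] [AddCommGroup M] [Module R M] {B : LinearMap.BilinForm R M}

theorem two_mul_bilinForm_apply_of_apply_self_eq_mul (hB : B.IsSymm) {g h : Dual R M}
    (hgh : ∀ v, B v v = g v * h v) (x y : M) : 2 * B x y = g x * h y + h x * g y := by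
  have hxy := hgh (x + y)
  simp only [map_add, LinearMap.add_apply] at hxy
  linear_combination hxy - hgh x - hgh y + hB.eq x y

theorem range_bilinForm_le_span_pair_of_apply_self_eq_mul [Invertible (2 : R)] (hB : B.IsSymm)
    {g h : Dual R M} (hgh : ∀ v, B v v = g v * h v) :
    LinearMap.range B ≤ Submodule.span R {g, h} := by
  rintro _ ⟨x, rfl⟩
  refine Submodule.mem_span_pair.2 ⟨⅟2 * h x, ⅟2 * g x, LinearMap.ext fun y ↦ ?_⟩
  calc (⅟2 * h x) * g y + (⅟2 * g x) * h y
      = ⅟2 * (2 * B x y) := by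
        rw [two_mul_bilinForm_apply_of_apply_self_eq_mul hB hgh]; ring
    _ = B x y := invOf_mul_cancel_left' 2 (B x y)

theorem finrank_range_bilinForm_le_two_of_apply_self_eq_mul [Nontrivial R] [Invertible (2 : R)]
    (hB : B.IsSymm) {g h : Dual R M} (hgh : ∀ v, B v v = g v * h v) :
    finrank R (LinearMap.range B) ≤ 2 := by
  have : Module.Finite R (Submodule.span R {g, h}) := .span_of_finite R (Set.toFinite {g, h})
  calc finrank R (LinearMap.range B)
      ≤ finrank R (Submodule.span R {g, h}) :=
        Submodule.finrank_mono (range_bilinForm_le_span_pair_of_apply_self_eq_mul hB hgh)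
    _ ≤ 2 := by
        rw [← Matrix.range_cons_cons_empty g h ![]]
        exact finrank_range_le_card ![g, h]

theorem finrank_range_restrict_of_codisjoint_ker (hB : B.IsRefl) {W : Submodule R M}
    (hW : Codisjoint W (LinearMap.ker B)) :
    finrank R (LinearMap.range (B.restrict W)) = finrank R (LinearMap.range B) := by
  have injective_dualRestrict : Function.Injective
      (W.dualRestrict.domRestrict (LinearMap.range B)) := by
    rw [LinearMap.injective_domRestrict_iff, Submodule.disjoint_def]
    rintro _ ⟨x, rfl⟩ hker
    have hle : W ⊔ LinearMap.ker B ≤ LinearMap.ker (B x) :=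
      sup_le (fun w hw ↦ LinearMap.congr_fun hker ⟨w, hw⟩)
        fun k hk ↦ hB k x (LinearMap.congr_fun hk x)
    exact LinearMap.ker_eq_top.1 (top_le_iff.1 (hW.eq_top ▸ hle))
  have range_restrict : LinearMap.range (B.restrict W) =
      LinearMap.range (W.dualRestrict.domRestrict (LinearMap.range B)) :=
    calc LinearMap.range (B.restrict W)
        = (W.map B).map W.dualRestrict := by
          rw [← LinearMap.range_domRestrict W B, ← LinearMap.range_comp]; rfl
      _ = (LinearMap.range B).map W.dualRestrict := by rw [Submodule.map_eq_range_iff.2 hW]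
      _ = _ := (LinearMap.range_domRestrict _ _).symm
  rw [range_restrict]
  exact LinearMap.finrank_range_of_inj injective_dualRestrict

end CommRing

section Field

variable {K V W : Type*} [Field K] [AddCommGroup V] [Module K V] [AddCommGroup W] [Module K W]

theorem ker_le_ker_of_finrank_range_restrict_ker_ne {B : LinearMap.BilinForm K V} (hB : B.IsRefl)
    {l : Dual K V}
    (hl : finrank K (LinearMap.range (B.restrict (LinearMap.ker l))) ≠
      finrank K (LinearMap.range B)) :
    LinearMap.ker B ≤ LinearMap.ker l := by
  intro k hk
  by_contra hlk
  have codisjoint_ker : Codisjoint (LinearMap.ker l) (LinearMap.ker B) := by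
    rw [codisjoint_iff_le_sup, ← l.span_singleton_sup_ker_eq_top hlk, sup_comm]
    exact sup_le_sup_left ((Submodule.span_singleton_le_iff_mem k _).2 hk) _
  exact hl (finrank_range_restrict_of_codisjoint_ker hB codisjoint_ker)

theorem finrank_dualAnnihilator_ker (f : V →ₗ[K] W) :
    finrank K (LinearMap.ker f).dualAnnihilator = finrank K (LinearMap.range f) := by
  rw [← f.range_dualMap_eq_dualAnnihilator_ker, f.finrank_range_dualMap_eq_finrank_range]

theorem finrank_span_le_finrank_range_of_ker_le_ker (f : V →ₗ[K] W)
    [FiniteDimensional K (LinearMap.range f)] {S : Set (Dual K V)}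
    (hS : ∀ l ∈ S, LinearMap.ker f ≤ LinearMap.ker l) :
    finrank K (Submodule.span K S) ≤ finrank K (LinearMap.range f) := by
  have span_le : Submodule.span K S ≤ (LinearMap.ker f).dualAnnihilator :=
    Submodule.span_le.2 fun l hl ↦ (Submodule.mem_dualAnnihilator l).2 (hS l hl)
  have : FiniteDimensional K (LinearMap.ker f).dualAnnihilator := by
    have := f.quotKerEquivRange.symm.finiteDimensional
    exact (LinearMap.ker f).dualQuotEquivDualAnnihilator.finiteDimensional
  exact (Submodule.finrank_mono span_le).trans_eq (finrank_dualAnnihilator_ker f)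

theorem finrank_range_toBilin' {ι : Type*} [Fintype ι] [DecidableEq ι] (A : Matrix ι ι K) :
    finrank K (LinearMap.range (Matrix.toBilin' A)) = A.rank := by
  have toBilin'_eq : Matrix.toBilin' A =
      (dotProductEquiv K ι).toLinearMap ∘ₗ Aᵀ.mulVecLin := by
    ext; simp
  rw [toBilin'_eq, LinearMap.range_comp, LinearEquiv.finrank_map_eq, ← Matrix.rank_transpose A]
  rfl

theorem span_of_functionals_splitting_rank_three_quadric_le_three_general [Invertible (2 : K)]
    {B : LinearMap.BilinForm K V} (hB : B.IsSymm) (hrk : 2 < finrank K (LinearMap.range B))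
    {S : Set (Dual K V)}
    (hS : ∀ l ∈ S, ∃ g h : Dual K (LinearMap.ker l), ∀ v : LinearMap.ker l,
      B v v = g v * h v) :
    finrank K (Submodule.span K S) ≤ finrank K (LinearMap.range B) := by
  have : FiniteDimensional K (LinearMap.range B) := FiniteDimensional.of_finrank_pos (by omega)
  refine finrank_span_le_finrank_range_of_ker_le_ker B fun l hl ↦ ?_
  obtain ⟨g, h, hgh⟩ := hS l hl
  have restrict_le : finrank K (LinearMap.range (B.restrict (LinearMap.ker l))) ≤ 2 :=
    finrank_range_bilinForm_le_two_of_apply_self_eq_mul (hB.restrict _) hgh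
  exact ker_le_ker_of_finrank_range_restrict_ker_ne hB.isRefl (restrict_le.trans_lt hrk).ne

end Field

/-- Let `Q(x) = xᵀ A x` be a quadratic form on `ℂⁿ` of rank exactly `3` (`A` symmetric,
`rank A = 3`), and let `S` be a set of non-zero linear functionals `l` on `ℂⁿ` such that
the restriction of `Q` to each hyperplane `ker l` has rank at most `2`, i.e. is a
product of two linear forms on `ker l`. Then the span of `S` has dimension at most `3`. -/
theorem span_of_functionals_splitting_rank_three_quadric_le_three
    (n : ℕ) (A : Matrix (Fin n) (Fin n) ℂ) (hA : A.IsSymm) (hrk : A.rank = 3)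
    (S : Set ((Fin n → ℂ) →ₗ[ℂ] ℂ))
    (hS : ∀ l ∈ S, l ≠ 0 ∧
      ∃ g h : ↥(LinearMap.ker l) →ₗ[ℂ] ℂ,
        ∀ v : ↥(LinearMap.ker l),
          (∑ i, ∑ j, A i j * (v : Fin n → ℂ) i * (v : Fin n → ℂ) j) = g v * h v) :
    Module.finrank ℂ ↥(Submodule.span ℂ S) ≤ 3 := by
  have hrange := (finrank_range_toBilin' A).trans hrk
  refine hrange ▸ span_of_functionals_splitting_rank_three_quadric_le_three_general
    (Matrix.isSymm_toBilin'_iff_isSymm.2 hA) (by omega) fun l hl ↦ ?_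
  simpa only [Matrix.toBilin'_apply, mul_comm (A _ _)] using (hS l hl).2
end

section
/- Let F_1, F_2, F_3 ∈ ℂ[x_0, …, x_n] be pairwise coprime polynomials, each a product of non-zero homogeneous linear polynomials, such that F_1 + F_2 + F_3 = 0. Then for every linear factor l_1 of F_1 and every linear factor l_2 of F_2, some linear factor l_3 of F_3 lies in the ℂ-linear span of l_1 and l_2 (equivalently, l_3 ∈ ⟨l_1, l_2⟩). -/
/-!
Let `p` and `q` be linear forms with span `W`. Sending each variable to its image under a linear
projection of the polynomial ring with kernel `W` defines an algebra endomorphism `φ` that agrees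
with the projection on all linear forms, so a linear form is killed by `φ` exactly when it lies
in `W`. If `p` divides `F`, `q` divides `G` and `F + G + ∏ lᵢ = 0`, then `∏ φ lᵢ = 0`; as the
polynomial ring is a domain, `φ lᵢ = 0` for some `i`, that is, `lᵢ ∈ W`.
-/

section LinearForms

open MvPolynomial

theorem aeval_map_X_of_isHomogeneous_one {σ R A : Type*} [CommSemiring R] [CommSemiring A]
    [Algebra R A] (f : MvPolynomial σ R →ₗ[R] A) {p : MvPolynomial σ R}
    (hp : p.IsHomogeneous 1) : aeval (fun i => f (X i)) p = f p := by
  rw [← mem_homogeneousSubmodule, homogeneousSubmodule_one_eq_span_X] at hp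
  have agree_on_X : Set.EqOn (aeval fun i => f (X i)).toLinearMap f (Set.range X) := by
    rintro _ ⟨i, rfl⟩
    simp
  exact LinearMap.eqOn_span agree_on_X hp

variable {σ K ι : Type*} [Field K]

theorem exists_algHom_forall_isHomogeneous_one_eq_zero_iff (W : Submodule K (MvPolynomial σ K)) :
    ∃ φ : MvPolynomial σ K →ₐ[K] MvPolynomial σ K,
      ∀ p : MvPolynomial σ K, p.IsHomogeneous 1 → (φ p = 0 ↔ p ∈ W) := by
  obtain ⟨W', hW'⟩ := W.exists_isCompl
  refine ⟨aeval fun i => W'.projection W hW'.symm (X i), fun p hp => ?_⟩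
  rw [aeval_map_X_of_isHomogeneous_one _ hp, ← LinearMap.mem_ker, Submodule.ker_projection]

theorem exists_mem_span_of_prod_mem_ideal_span_of_isHomogeneous_one
    {S : Set (MvPolynomial σ K)} {s : Finset ι} {l : ι → MvPolynomial σ K}
    (hS : ∀ p ∈ S, p.IsHomogeneous 1) (hl : ∀ i ∈ s, (l i).IsHomogeneous 1)
    (hprod : ∏ i ∈ s, l i ∈ Ideal.span S) :
    ∃ i ∈ s, l i ∈ Submodule.span K S := by
  obtain ⟨φ, hφ⟩ := exists_algHom_forall_isHomogeneous_one_eq_zero_iff (Submodule.span K S)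
  have span_le_ker : Ideal.span S ≤ RingHom.ker φ :=
    Ideal.span_le.mpr fun p hp => (hφ p (hS p hp)).mpr (Submodule.subset_span hp)
  have prod_eq_zero : ∏ i ∈ s, φ (l i) = 0 := by
    rw [← map_prod]
    exact span_le_ker hprod
  obtain ⟨i, hi, hφi⟩ := Finset.prod_eq_zero_iff.mp prod_eq_zero
  exact ⟨i, hi, (hφ (l i) (hl i hi)).mp hφi⟩

end LinearForms

theorem exists_factor_in_span_of_coprime_sum_zero_general {σ K ι : Type*} [Field K]
    {p q F G : MvPolynomial σ K} {s : Finset ι} {l : ι → MvPolynomial σ K}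
    (hp : p.IsHomogeneous 1) (hq : q.IsHomogeneous 1) (hl : ∀ i ∈ s, (l i).IsHomogeneous 1)
    (hpF : p ∣ F) (hqG : q ∣ G) (hzero : F + G + ∏ i ∈ s, l i = 0) :
    ∃ i ∈ s, l i ∈ Submodule.span K {p, q} := by
  refine exists_mem_span_of_prod_mem_ideal_span_of_isHomogeneous_one (by simp [hp, hq]) hl ?_
  have hF : F ∈ Ideal.span {p, q} := Ideal.mem_of_dvd _ hpF (Ideal.subset_span (by simp))
  have hG : G ∈ Ideal.span {p, q} := Ideal.mem_of_dvd _ hqG (Ideal.subset_span (by simp))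
  rw [eq_neg_of_add_eq_zero_right hzero]
  exact neg_mem (add_mem hF hG)

/-- If `F₁, F₂, F₃ ∈ ℂ[x₀, …, xₙ]` are pairwise coprime products of non-zero homogeneous
linear polynomials with `F₁ + F₂ + F₃ = 0`, then for every linear factor `l₁` of `F₁` and
every linear factor `l₂` of `F₂` some linear factor of `F₃` lies in the `ℂ`-linear span
of `l₁` and `l₂`. -/
theorem exists_factor_in_span_of_coprime_sum_zero
    (n : ℕ) (d : Fin 3 → ℕ)
    (l : (i : Fin 3) → Fin (d i) → MvPolynomial (Fin (n + 1)) ℂ)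
    (hne : ∀ i j, l i j ≠ 0) (hhom : ∀ i j, (l i j).IsHomogeneous 1)
    (hcop : ∀ i j, i ≠ j →
      ∀ g : MvPolynomial (Fin (n + 1)) ℂ, g ∣ (∏ t, l i t) → g ∣ (∏ t, l j t) → IsUnit g)
    (hzero : (∏ t, l 0 t) + (∏ t, l 1 t) + (∏ t, l 2 t) = 0) :
    ∀ (j₁ : Fin (d 0)) (j₂ : Fin (d 1)), ∃ j₃ : Fin (d 2),
      l 2 j₃ ∈ Submodule.span ℂ {l 0 j₁, l 1 j₂} := by
  intro j₁ j₂
  simpa using exists_factor_in_span_of_coprime_sum_zero_general (hhom 0 j₁) (hhom 1 j₂)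
    (fun j _ => hhom 2 j) (Finset.dvd_prod_of_mem (l 0) (Finset.mem_univ j₁))
    (Finset.dvd_prod_of_mem (l 1) (Finset.mem_univ j₂)) hzero
end
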